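/- Let d ≥ 3 and let q_1, …, q_d be pairwise coprime positive integers. Assume the Γ-periodic potentials V, Y : ℤ^d → ℝ are Fermi isospectral and that Y = ⊕_{j=1}^r Y_j is (d_1,…,d_r) separable. Then V = ⊕_{j=1}^r V_j is (d_1,…,d_r) separable, and moreover for each j = 1,…,r there exists a constant C_j ∈ ℝ such that V_j + C_j and Y_j are Floquet isospectral as Γ_j-periodic potentials on ℤ^{d_j}. -/

import Mathlib

open scoped BigOperators
open Complex

noncomputable section

/-- The fundamental domain `W` for `Γ = q₁ℤ ⊕ ⋯ ⊕ q_dℤ`, as a type. -/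
abbrev Cell (d : ℕ) (q : Fin d → ℕ) := (j : Fin d) → Fin (q j)

/-- `V : ℤ^d → ℝ` is `Γ`-periodic for `Γ = q₁ℤ ⊕ ⋯ ⊕ q_dℤ`. -/
def IsPeriodicPotential (d : ℕ) (q : Fin d → ℕ) (V : (Fin d → ℤ) → ℝ) : Prop :=
  ∀ n γ : Fin d → ℤ, (∀ j, (q j : ℤ) ∣ γ j) → V (n + γ) = V n

/-- The discrete Fourier transform `V̂(l)`, defined for all `l ∈ ℤ^d`
(it is automatically `Γ`-periodic in `l`). -/
def dft (d : ℕ) (q : Fin d → ℕ) (V : (Fin d → ℤ) → ℝ) (l : Fin d → ℤ) : ℂ :=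
  (1 / ∏ j, (q j : ℂ)) *
    ∑ n : Cell d q, (V (fun j => ((n j : ℕ) : ℤ)) : ℂ) *
      Complex.exp (-(2 * Real.pi * Complex.I) * ∑ j, (l j : ℂ) * ((n j : ℕ) : ℂ) / (q j : ℂ))

/-- `ρ^j_m = e^{2πi m/q_j}`. -/
def rho (d : ℕ) (q : Fin d → ℕ) (j : Fin d) (m : ℤ) : ℂ :=
  Complex.exp (2 * Real.pi * Complex.I * (m : ℂ) / (q j : ℂ))

/-- The Floquet matrix `M_V(z)` (the matrix `A + B_V` of Lemma 2.7). -/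
def floquetMatrix (d : ℕ) (q : Fin d → ℕ) (V : (Fin d → ℤ) → ℝ) (z : Fin d → ℂ) :
    Matrix (Cell d q) (Cell d q) ℂ := fun n n' =>
  (if n = n' then ∑ j, (rho d q j (n j : ℕ) * z j + (rho d q j (n j : ℕ) * z j)⁻¹) else 0)
    + dft d q V (fun j => ((n j : ℕ) : ℤ) - ((n' j : ℕ) : ℤ))

/-- `P̃_V(z, λ) = det (M_V(z) − λ I)`. -/
def floquetDet (d : ℕ) (q : Fin d → ℕ) (V : (Fin d → ℤ) → ℝ) (z : Fin d → ℂ) (lam : ℂ) : ℂ :=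
  Matrix.det (floquetMatrix d q V z - lam • (1 : Matrix (Cell d q) (Cell d q) ℂ))

/-- `V` and `Y` are Fermi isospectral. -/
def FermiIsospectral (d : ℕ) (q : Fin d → ℕ) (V Y : (Fin d → ℤ) → ℝ) : Prop :=
  ∃ lam0 : ℂ,
    {z : Fin d → ℂ | (∀ j, z j ≠ 0) ∧ floquetDet d q V z lam0 = 0}
      = {z : Fin d → ℂ | (∀ j, z j ≠ 0) ∧ floquetDet d q Y z lam0 = 0}

/-- `V` and `Y` are Floquet isospectral. -/
def FloquetIsospectral (d : ℕ) (q : Fin d → ℕ) (V Y : (Fin d → ℤ) → ℝ) : Prop :=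
  ∀ z : Fin d → ℂ, (∀ j, z j ≠ 0) → ∀ lam : ℂ,
    floquetDet d q V z lam = floquetDet d q Y z lam

/-- The average `[V]` of `V` over one periodicity cell. -/
def potentialAvg (d : ℕ) (q : Fin d → ℕ) (V : (Fin d → ℤ) → ℝ) : ℝ :=
  (1 / ∏ j, (q j : ℝ)) * ∑ n : Cell d q, V (fun j => ((n j : ℕ) : ℤ))

/-- The embedding of the `j`-th block of coordinates into `Fin d`,
given block sizes `D : Fin r → ℕ` with `∑ j, D j = d`. -/
def blockEmbed {r d : ℕ} (D : Fin r → ℕ) (hsum : ∑ j, D j = d) (j : Fin r) (i : Fin (D j)) :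
    Fin d :=
  ⟨(∑ k ∈ Finset.univ.filter (fun k => k < j), D k) + i.1, by
    have hj : j ∉ Finset.univ.filter (fun k => k < j) := by simp
    have h2 : (∑ k ∈ Finset.univ.filter (fun k => k < j), D k) + D j ≤ ∑ k, D k := by
      calc (∑ k ∈ Finset.univ.filter (fun k => k < j), D k) + D j
          = ∑ k ∈ insert j (Finset.univ.filter (fun k => k < j)), D k := by
            rw [Finset.sum_insert hj, add_comm]
        _ ≤ ∑ k, D k := Finset.sum_le_sum_of_subset (Finset.subset_univ _)
    have h3 := i.2
    omega⟩

/-- `V` is `(D 0, …, D (r-1))` separable. -/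
def IsSeparablePotential {r : ℕ} (d : ℕ) (D : Fin r → ℕ) (hsum : ∑ j, D j = d)
    (V : (Fin d → ℤ) → ℝ) : Prop :=
  ∃ Vj : (j : Fin r) → (Fin (D j) → ℤ) → ℝ,
    ∀ n : Fin d → ℤ, V n = ∑ j, Vj j (fun i => n (blockEmbed D hsum j i))

section Part1

section Abstract
open Polynomial Filter Topology

/-- The polynomial matrix `diag(c) X² + B X + diag(e)`. -/
def quadPoly {W : Type*} [Fintype W] [DecidableEq W] (c e : W → ℂ) (B : Matrix W W ℂ) : ℂ[X] :=
  Matrix.det (Matrix.of fun n m : W =>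
    (if n = m then C (c n) * X ^ 2 + C (e n) else 0) + C (B n m) * X)

lemma quadPoly_eval {W : Type*} [Fintype W] [DecidableEq W] (c e : W → ℂ) (B : Matrix W W ℂ)
    (w : ℂ) : (quadPoly c e B).eval w =
      Matrix.det (Matrix.diagonal (fun n => c n * w ^ 2 + e n) + w • B) := by
  unfold quadPoly
  rw [← Polynomial.coe_evalRingHom, RingHom.map_det]
  congr 1
  ext n m
  by_cases h : n = m
  · subst h
    simp
    ring
  · simp [h]
    ring

lemma quadPoly_eval' {W : Type*} [Fintype W] [DecidableEq W] (c : W → ℂ)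
    (B : Matrix W W ℂ) (w : ℂ) (hw : w ≠ 0) :
    (quadPoly c (fun n => (c n)⁻¹) B).eval w = w ^ (Fintype.card W) *
      Matrix.det (Matrix.diagonal (fun n => c n * w + (c n * w)⁻¹) + B) := by
  rw [quadPoly_eval, ← Matrix.det_smul]
  congr 1
  ext n m
  by_cases h : n = m
  · subst h
    simp only [Matrix.add_apply, Matrix.diagonal_apply_eq, Matrix.smul_apply, smul_eq_mul]
    rw [mul_inv]
    field_simp
  · simp [h]

lemma quadPoly_entry_natDegree {W : Type*} [Fintype W] [DecidableEq W] (c e : W → ℂ)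
    (B : Matrix W W ℂ) (n m : W) :
    ((if n = m then C (c n) * X ^ 2 + C (e n) else 0) + C (B n m) * X : ℂ[X]).natDegree ≤ 2 := by
  split_ifs
  · compute_degree
  · rw [zero_add]
    exact (natDegree_C_mul_le _ _).trans (natDegree_X_le.trans (by norm_num))

lemma quadPoly_natDegree {W : Type*} [Fintype W] [DecidableEq W] (c e : W → ℂ)
    (B : Matrix W W ℂ) : (quadPoly c e B).natDegree ≤ Fintype.card W * 2 := by
  unfold quadPoly
  rw [Matrix.det_apply]
  refine natDegree_sum_le_of_forall_le _ _ fun σ _ => ?_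
  refine (natDegree_smul_le _ _).trans ?_
  refine (natDegree_prod_le _ _).trans ?_
  refine (Finset.sum_le_card_nsmul _ _ 2 fun i _ => ?_).trans (by simp)
  exact quadPoly_entry_natDegree c e B _ _

lemma quadPoly_coeff {W : Type*} [Fintype W] [DecidableEq W] (c e : W → ℂ)
    (B : Matrix W W ℂ) : (quadPoly c e B).coeff (Fintype.card W * 2) = ∏ n, c n := by
  unfold quadPoly
  rw [Matrix.det_apply, finsetSum_coeff, ← Matrix.det_diagonal, Matrix.det_apply]
  refine Finset.sum_congr rfl fun σ _ => ?_
  rw [coeff_smul]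
  congr 1
  have := coeff_prod_of_natDegree_le (s := (Finset.univ : Finset W))
    (fun i => (Matrix.of fun n m : W =>
    (if n = m then C (c n) * X ^ 2 + C (e n) else 0) + C (B n m) * X : Matrix W W ℂ[X]) (σ i) i) 2
    (fun p _ => by rw [Matrix.of_apply]; exact quadPoly_entry_natDegree c e B (σ p) p)
  rw [Finset.card_univ] at this
  rw [this]
  refine Finset.prod_congr rfl fun i _ => ?_
  by_cases h : σ i = i
  · simp [h]
  · simp [h]

lemma quadPoly_eval_zero {W : Type*} [Fintype W] [DecidableEq W] (c e : W → ℂ)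
    (B : Matrix W W ℂ) : (quadPoly c e B).eval 0 = ∏ n, e n := by
  rw [quadPoly_eval]; simp

/-- A polynomial which is small at a point has a root close to that point. -/
lemma exists_root_near (p : ℂ[X]) (N : ℕ) (hN : p.natDegree = N) (hp : p ≠ 0) (u : ℂ) (ε : ℝ)
    (hε : 0 < ε) (h : ‖p.eval u‖ < ‖p.leadingCoeff‖ * ε ^ N) : ∃ x, p.eval x = 0 ∧ ‖x - u‖ < ε := by
  by_contra hcon
  push Not at hcon
  have hs := IsAlgClosed.splits p
  have heq : p.eval u = p.leadingCoeff * (p.roots.map fun a => u - a).prod := by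
    conv_lhs => rw [hs.eq_prod_roots]
    simp [eval_multiset_prod]
  have hcard : p.roots.card = N := by rw [← hN]; exact hs.natDegree_eq_card_roots.symm
  have key : ∀ s : Multiset ℂ, (∀ a ∈ s, ε ≤ ‖u - a‖) →
      ε ^ s.card ≤ ‖(s.map fun a => u - a).prod‖ := by
    intro s
    induction s using Multiset.induction_on with
    | empty => simp
    | cons a s ih =>
      intro hs
      simp only [Multiset.card_cons, Multiset.map_cons, Multiset.prod_cons, norm_mul, pow_succ']
      have h1 := hs a (by simp)
      have h2 := ih (fun b hb => hs b (by simp [hb]))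
      gcongr
  have h2 := key p.roots (fun a ha => by
    rw [norm_sub_rev]
    exact hcon a ((mem_roots hp).1 ha))
  rw [heq, norm_mul] at h
  rw [hcard] at h2
  have : 0 ≤ ‖p.leadingCoeff‖ := norm_nonneg _
  nlinarith

lemma roots_large {W : Type*} [Fintype W] [DecidableEq W] (c l : W → ℂ) (hc : ∀ n, c n ≠ 0)
    (hl : ∀ n, l n ≠ 0) (hd : ∀ n m, n ≠ m → l n / c n ≠ l m / c m)
    (B : ℝ → Matrix W W ℂ)
    (hB : Tendsto (fun s : ℝ => (s : ℂ)⁻¹ • B s) atTop (𝓝 (Matrix.diagonal l))) :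
    ∀ᶠ s : ℝ in atTop, ∃ w : W → ℂ, Function.Injective w ∧ ∀ n, 1 < ‖w n‖ ∧
      Matrix.det (Matrix.diagonal (fun m => c m * w n + (c m * w n)⁻¹) + B s) = 0 := by
  set u : W → ℂ := fun n => - (l n / c n) with hu
  have hu0 : ∀ n, u n ≠ 0 := fun n => by simp [hu, hc n, hl n]
  have huinj : ∀ n m, n ≠ m → u n ≠ u m := fun n m h => by
    simp only [hu, ne_eq, neg_inj]; exact hd n m h
  -- a separation radius
  obtain ⟨ε, hε, hε1, hε2⟩ : ∃ ε : ℝ, 0 < ε ∧ (∀ n, 2 * ε < ‖u n‖) ∧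
      (∀ n m, n ≠ m → 2 * ε < ‖u n - u m‖) := by
    have e1 : ∀ᶠ ε : ℝ in 𝓝[>] 0, ∀ n, 2 * ε < ‖u n‖ := by
      rw [eventually_all]
      intro n
      have : Tendsto (fun ε : ℝ => 2 * ε) (𝓝[>] 0) (𝓝 0) := by
        have : Tendsto (fun ε : ℝ => 2 * ε) (𝓝 0) (𝓝 (2 * 0)) :=
          tendsto_id.const_mul 2
        rw [mul_zero] at this
        exact this.mono_left nhdsWithin_le_nhds
      exact this.eventually_lt_const (norm_pos_iff.2 (hu0 n))
    have e2 : ∀ᶠ ε : ℝ in 𝓝[>] 0, ∀ n m, n ≠ m → 2 * ε < ‖u n - u m‖ := by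
      rw [eventually_all]
      intro n
      rw [eventually_all]
      intro m
      by_cases hnm : n = m
      · simp [hnm]
      have : Tendsto (fun ε : ℝ => 2 * ε) (𝓝[>] 0) (𝓝 0) := by
        have : Tendsto (fun ε : ℝ => 2 * ε) (𝓝 0) (𝓝 (2 * 0)) :=
          tendsto_id.const_mul 2
        rw [mul_zero] at this
        exact this.mono_left nhdsWithin_le_nhds
      filter_upwards [this.eventually_lt_const (norm_pos_iff.2 (sub_ne_zero.2 (huinj n m hnm)))]
        with ε h _ using h
    obtain ⟨ε, h1, h2, h3⟩ := (e1.and (e2.and self_mem_nhdsWithin)).exists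
    exact ⟨ε, h3, h1, h2⟩
  -- scaled polynomial
  set P : ℝ → ℂ[X] := fun s => quadPoly c (fun n => (c n)⁻¹ * ((s : ℂ)⁻¹) ^ 2) ((s : ℂ)⁻¹ • B s)
    with hP
  have hprod : (∏ n, c n) ≠ 0 := Finset.prod_ne_zero_iff.2 fun n _ => hc n
  have hdeg : ∀ s, (P s).natDegree = Fintype.card W * 2 := fun s =>
    natDegree_eq_of_le_of_coeff_ne_zero (quadPoly_natDegree _ _ _)
      (by rw [hP]; simp only; rw [quadPoly_coeff]; exact hprod)
  have hlead : ∀ s, (P s).leadingCoeff = ∏ n, c n := fun s => by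
    rw [leadingCoeff, hdeg s]; exact quadPoly_coeff _ _ _
  have hne : ∀ s, P s ≠ 0 := fun s h => by
    have := hlead s; rw [h] at this; simp at this; exact hprod this.symm
  have hsinv : Tendsto (fun s : ℝ => (s : ℂ)⁻¹) atTop (𝓝 0) := by
    have : Tendsto (fun s : ℝ => ((s⁻¹ : ℝ) : ℂ)) atTop (𝓝 ((0 : ℝ) : ℂ)) :=
      (Complex.continuous_ofReal.tendsto 0).comp tendsto_inv_atTop_zero
    simpa using this
  have hlim : ∀ n, Tendsto (fun s => (P s).eval (u n)) atTop (𝓝 0) := by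
    intro n
    have h0 : (0 : ℂ) = Matrix.det
        (Matrix.diagonal (fun m => c m * u n ^ 2 + (c m)⁻¹ * 0 ^ 2) + u n • Matrix.diagonal l) := by
      rw [← Matrix.diagonal_smul, Matrix.diagonal_add, Matrix.det_diagonal]
      symm
      apply Finset.prod_eq_zero (Finset.mem_univ n)
      simp only [hu, Pi.smul_apply, smul_eq_mul]
      have := hc n
      field_simp
      ring
    rw [h0]
    simp only [hP, quadPoly_eval]
    have hcont : Continuous (fun M : Matrix W W ℂ => M.det) := Continuous.matrix_det continuous_id
    refine (hcont.tendsto _).comp ?_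
    refine Tendsto.add ?_ (hB.const_smul (u n))
    have hcd : Continuous (fun v : W → ℂ => Matrix.diagonal v) :=
      Continuous.matrix_diagonal continuous_id
    refine (hcd.tendsto _).comp ?_
    rw [tendsto_pi_nhds]
    intro m
    exact tendsto_const_nhds.add (tendsto_const_nhds.mul (hsinv.pow 2))
  have hev : ∀ᶠ s in atTop, ∀ n, ‖(P s).eval (u n)‖ <
      ‖∏ n, c n‖ * ε ^ (Fintype.card W * 2) := by
    rw [eventually_all]
    intro n
    have := (hlim n).norm
    rw [norm_zero] at this
    exact this.eventually_lt_const (by positivity)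
  filter_upwards [hev, eventually_gt_atTop (0 : ℝ), eventually_gt_atTop (1 / ε)] with s hs hs0 hsε
  have hr : ∀ n, ∃ x, (P s).eval x = 0 ∧ ‖x - u n‖ < ε := fun n =>
    exists_root_near (P s) _ (hdeg s) (hne s) (u n) ε hε (by rw [hlead]; exact hs n)
  choose x hx0 hx1 using hr
  have hsC : (s : ℂ) ≠ 0 := by exact_mod_cast hs0.ne'
  have hxn : ∀ n, ε < ‖x n‖ := fun n => by
    have h1 := hx1 n
    have h2 := hε1 n
    have h3 := norm_sub_norm_le (u n) (x n)
    rw [norm_sub_rev] at h3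
    linarith
  refine ⟨fun n => s * x n, ?_, ?_⟩
  · intro n m h
    by_contra hnm
    have hxx : x n = x m := mul_left_cancel₀ hsC h
    have h1 := hx1 n
    have h2 := hx1 m
    have h3 := hε2 n m hnm
    have h4 : ‖u n - u m‖ ≤ ‖x n - u n‖ + ‖x m - u m‖ := by
      have : u n - u m = -(x n - u n) + (x m - u m) := by rw [hxx]; ring
      rw [this]
      refine (norm_add_le _ _).trans ?_
      rw [norm_neg]
    linarith
  · intro n
    have hxne : x n ≠ 0 := norm_pos_iff.1 (hε.trans (hxn n))
    constructor
    · rw [norm_mul, Complex.norm_real, Real.norm_of_nonneg hs0.le]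
      have h1 := hxn n
      have h2 : 1 < s * ε := by rwa [div_lt_iff₀ hε] at hsε
      nlinarith
    · have h := hx0 n
      simp only [hP, quadPoly_eval] at h
      have h2 : Matrix.diagonal (fun m => c m * x n ^ 2 + (c m)⁻¹ * (s : ℂ)⁻¹ ^ 2) +
          x n • (s : ℂ)⁻¹ • B s = (x n * (s : ℂ)⁻¹) •
          (Matrix.diagonal (fun m => c m * (s * x n) + (c m * (s * x n))⁻¹) + B s) := by
        rw [smul_add, ← Matrix.diagonal_smul, smul_smul]
        congr 2
        ext m
        have := hc m
        simp only [Pi.smul_apply, smul_eq_mul]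
        field_simp
      rw [h2, Matrix.det_smul] at h
      rcases mul_eq_zero.1 h with h | h
      · exact absurd (eq_zero_of_pow_eq_zero h) (mul_ne_zero hxne (inv_ne_zero hsC))
      · exact h
end Abstract

end Part1

section Part2

section Abstract2
open Polynomial Filter Topology

lemma fiber_eq {W : Type*} [Fintype W] [DecidableEq W] (c l : W → ℂ) (hc : ∀ n, c n ≠ 0)
    (hl : ∀ n, l n ≠ 0) (hd : ∀ n m, n ≠ m → l n / c n ≠ l m / c m)
    (hd' : ∀ n m, n ≠ m → l n * c n ≠ l m * c m)
    (B₁ B₂ : ℝ → Matrix W W ℂ)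
    (hB : Tendsto (fun s : ℝ => (s : ℂ)⁻¹ • B₁ s) atTop (𝓝 (Matrix.diagonal l)))
    (hz : ∀ s : ℝ, 0 < s → ∀ w : ℂ, w ≠ 0 →
      Matrix.det (Matrix.diagonal (fun m => c m * w + (c m * w)⁻¹) + B₁ s) = 0 →
      Matrix.det (Matrix.diagonal (fun m => c m * w + (c m * w)⁻¹) + B₂ s) = 0) :
    ∀ᶠ s : ℝ in atTop, ∀ w : ℂ, w ≠ 0 →
      Matrix.det (Matrix.diagonal (fun m => c m * w + (c m * w)⁻¹) + B₁ s) =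
      Matrix.det (Matrix.diagonal (fun m => c m * w + (c m * w)⁻¹) + B₂ s) := by
  have h1 := roots_large c l hc hl hd B₁ hB
  have h2 := roots_large (fun n => (c n)⁻¹) l (fun n => inv_ne_zero (hc n)) hl
    (by simpa only [div_inv_eq_mul] using hd') B₁ hB
  filter_upwards [h1, h2, eventually_gt_atTop (0 : ℝ)] with s ⟨w₁, hi1, hw1⟩ ⟨w₂, hi2, hw2⟩ hs
  set p₁ := quadPoly c (fun n => (c n)⁻¹) (B₁ s) with hp1
  set p₂ := quadPoly c (fun n => (c n)⁻¹) (B₂ s) with hp2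
  have hn1 : ∀ n, w₁ n ≠ 0 := fun n => norm_pos_iff.1 (zero_lt_one.trans (hw1 n).1)
  have hn2 : ∀ n, w₂ n ≠ 0 := fun n => norm_pos_iff.1 (zero_lt_one.trans (hw2 n).1)
  let f : W ⊕ W → ℂ := Sum.elim w₁ (fun n => (w₂ n)⁻¹)
  have hf0 : ∀ x, f x ≠ 0 := by
    rintro (n | n)
    · exact hn1 n
    · exact inv_ne_zero (hn2 n)
  have hfinj : Function.Injective f := by
    have hlt : ∀ n m, w₁ n ≠ (w₂ m)⁻¹ := fun n m h => by
      have a := (hw1 n).1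
      have b := (hw2 m).1
      rw [h, norm_inv] at a
      have := inv_lt_one_of_one_lt₀ b
      linarith
    rintro (n | n) (m | m) h
    · exact congrArg _ (hi1 h)
    · exact absurd h (hlt n m)
    · exact absurd h.symm (hlt m n)
    · exact congrArg _ (hi2 (inv_injective h))
  have hroot : ∀ x, Matrix.det (Matrix.diagonal (fun m => c m * f x + (c m * f x)⁻¹) + B₁ s) = 0 := by
    rintro (n | n)
    · exact (hw1 n).2
    · have := (hw2 n).2
      rw [← this]
      congr 3
      funext m
      simp only [f, Sum.elim_inr, mul_inv, inv_inv]
      ring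
  have heq : p₁ = p₂ := by
    refine Polynomial.eq_of_degree_sub_lt_of_eval_finset_eq (Finset.univ.image f) ?_ ?_
    · rw [Finset.card_image_of_injective _ hfinj, Finset.card_univ, Fintype.card_sum, ← mul_two]
      rw [Polynomial.degree_lt_iff_coeff_zero]
      intro k hk
      rcases hk.lt_or_eq with hk | hk
      · rw [coeff_sub, coeff_eq_zero_of_natDegree_lt ((quadPoly_natDegree _ _ _).trans_lt hk),
          coeff_eq_zero_of_natDegree_lt ((quadPoly_natDegree _ _ _).trans_lt hk), sub_zero]
      · rw [← hk, coeff_sub, hp1, hp2, quadPoly_coeff, quadPoly_coeff, sub_self]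
    · intro x hx
      obtain ⟨y, -, rfl⟩ := Finset.mem_image.1 hx
      rw [hp1, hp2, quadPoly_eval' _ _ _ (hf0 y), quadPoly_eval' _ _ _ (hf0 y), hroot y,
        hz s hs _ (hf0 y) (hroot y)]
  intro w hw
  have := congrArg (Polynomial.eval w) heq
  rw [hp1, hp2, quadPoly_eval' _ _ _ hw, quadPoly_eval' _ _ _ hw] at this
  exact mul_left_cancel₀ (pow_ne_zero _ hw) this

lemma block_limit_aux {W : Type*} [Fintype W] [DecidableEq W] (T : W → Prop) [DecidablePred T]
    (M : ℝ → Matrix W W ℂ) (L : Matrix W W ℂ) (l : W → ℂ)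
    (h1 : ∀ n m, T n → Tendsto (fun s => M s n m) atTop (𝓝 (L n m)))
    (h2 : ∀ n m, ¬ T n → Tendsto (fun s : ℝ => (s : ℂ)⁻¹ * M s n m) atTop
      (𝓝 (if n = m then l n else 0))) :
    Tendsto (fun s : ℝ => (∏ n, if T n then (1 : ℂ) else (s : ℂ)⁻¹) * (M s).det) atTop
      (𝓝 ((∏ n : {n // ¬ T n}, l n) * (Matrix.toSquareBlockProp L T).det)) := by
  set K : Matrix W W ℂ := Matrix.of fun n m => if T n then L n m else if n = m then l n else 0
    with hK
  have hKdet : K.det = (∏ n : {n // ¬ T n}, l n) * (Matrix.toSquareBlockProp L T).det := by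
    rw [Matrix.twoBlockTriangular_det K T, mul_comm]
    · congr 1
      · rw [← Matrix.det_diagonal]
        congr 1
        ext ⟨i, hi⟩ ⟨j, hj⟩
        simp [Matrix.toSquareBlockProp_def, hK, hi, Matrix.diagonal_apply]
      · congr 1
        ext ⟨i, hi⟩ ⟨j, hj⟩
        simp [Matrix.toSquareBlockProp_def, hK, hi]
    · intro i hi j hj
      have : i ≠ j := fun h => hi (h ▸ hj)
      simp [hK, hi, this]
  rw [← hKdet]
  have hcont : Continuous (fun M : Matrix W W ℂ => M.det) := Continuous.matrix_det continuous_id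
  have : Tendsto (fun s : ℝ => Matrix.det (Matrix.of fun n m =>
      (if T n then (1 : ℂ) else (s : ℂ)⁻¹) * M s n m)) atTop (𝓝 K.det) := by
    refine (hcont.tendsto K).comp ?_
    refine tendsto_pi_nhds.2 fun n => tendsto_pi_nhds.2 fun m => ?_
    by_cases hn : T n
    · simpa [hK, hn] using h1 n m hn
    · simpa [hK, hn] using h2 n m hn
  refine this.congr fun s => ?_
  rw [Matrix.det_mul_column]

lemma block_limit {W : Type*} [Fintype W] [DecidableEq W] (T : W → Prop) [DecidablePred T]
    (M M' : ℝ → Matrix W W ℂ) (L L' : Matrix W W ℂ) (l : W → ℂ) (hl : ∀ n, ¬ T n → l n ≠ 0)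
    (h1 : ∀ n m, T n → Tendsto (fun s => M s n m) atTop (𝓝 (L n m)))
    (h2 : ∀ n m, ¬ T n → Tendsto (fun s : ℝ => (s : ℂ)⁻¹ * M s n m) atTop
      (𝓝 (if n = m then l n else 0)))
    (h1' : ∀ n m, T n → Tendsto (fun s => M' s n m) atTop (𝓝 (L' n m)))
    (h2' : ∀ n m, ¬ T n → Tendsto (fun s : ℝ => (s : ℂ)⁻¹ * M' s n m) atTop
      (𝓝 (if n = m then l n else 0)))
    (hdet : ∀ᶠ s in atTop, (M s).det = (M' s).det) :
    (Matrix.toSquareBlockProp L T).det = (Matrix.toSquareBlockProp L' T).det := by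
  have a := block_limit_aux T M L l h1 h2
  have b := block_limit_aux T M' L' l h1' h2'
  have c := tendsto_nhds_unique (a.congr' (hdet.mono fun s hs => by rw [hs])) b
  exact mul_left_cancel₀ (Finset.prod_ne_zero_iff.2 fun (n : {n // ¬ T n}) _ => hl n.1 n.2) c

/-- Determinant of a polynomial in a matrix. -/
lemma det_aeval {n : Type*} [Fintype n] [DecidableEq n] (A : Matrix n n ℂ) (p : ℂ[X])
    (hp : p.Monic) :
    (aeval A p).det = (A.charpoly.roots.map fun x => p.eval x).prod := by
  have hs := IsAlgClosed.splits p
  have hA := IsAlgClosed.splits A.charpoly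
  have hch : ∀ a, (A - algebraMap ℂ _ a).det = (A.charpoly.roots.map fun x => x - a).prod := by
    intro a
    have h1 : A.charpoly.eval a = (A.charpoly.roots.map fun x => a - x).prod := by
      conv_lhs => rw [hA.eq_prod_roots, (Matrix.charpoly_monic A).leadingCoeff]
      simp [eval_multiset_prod]
    rw [Matrix.eval_charpoly] at h1
    have h2 : A - algebraMap ℂ _ a = -(Matrix.scalar n a - A) := by
      rw [neg_sub]; rfl
    rw [h2, Matrix.det_neg, h1]
    have hcard : Fintype.card n = A.charpoly.roots.card := by
      rw [← hA.natDegree_eq_card_roots, Matrix.charpoly_natDegree_eq_dim]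
    rw [hcard]
    generalize A.charpoly.roots = s
    induction s using Multiset.induction_on with
    | empty => simp
    | cons b s ih => simp only [Multiset.card_cons, Multiset.map_cons, Multiset.prod_cons, ← ih]; ring
  have h3 : p = (p.roots.map fun a => X - C a).prod := by
    conv_lhs => rw [hs.eq_prod_roots, hp.leadingCoeff]
    simp
  rw [h3]
  generalize p.roots = s
  induction s using Multiset.induction_on with
  | empty => simp
  | cons b s ih =>
    simp only [Multiset.map_cons, Multiset.prod_cons, map_mul, Matrix.det_mul, ih, eval_mul,
      Multiset.prod_map_mul]
    congr 1
    rw [map_sub, aeval_X, aeval_C, hch]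
    simp

/-- Determinant of a Kronecker sum. -/
lemma det_kronSum {n m : Type*} [Fintype n] [DecidableEq n] [Fintype m] [DecidableEq m]
    (A : Matrix n n ℂ) (B : Matrix m m ℂ) :
    Matrix.det (Matrix.of fun x y : m × n =>
      (if x.1 = y.1 then A x.2 y.2 else 0) + (if x.2 = y.2 then B x.1 y.1 else 0)) =
      (A.charpoly.roots.map fun x => Matrix.det (Matrix.scalar m x + B)).prod := by
  have h := Matrix.det_det (M := (Matrix.of fun i j : m => (if i = j then (X : ℂ[X]) else 0) +
    C (B i j))) ((aeval A : ℂ[X] →ₐ[ℂ] Matrix n n ℂ) : ℂ[X] →+* Matrix n n ℂ)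
  have hp : (Matrix.of fun i j : m => (if i = j then (X : ℂ[X]) else 0) + C (B i j)).det
      = (-B).charpoly := by
    rw [Matrix.charpoly]
    congr 1
    ext1 i j
    by_cases hij : i = j
    · subst hij; simp [Matrix.charmatrix]
    · simp [Matrix.charmatrix, hij]
  rw [hp] at h
  have h2 := det_aeval A (-B).charpoly (Matrix.charpoly_monic _)
  simp only [Matrix.eval_charpoly, sub_neg_eq_add] at h2
  rw [← h2]
  refine Eq.trans ?_ h.symm
  congr 1
  ext ⟨i, k⟩ ⟨j, l⟩
  simp only [Matrix.of_apply, Matrix.comp_apply, Matrix.map_apply, RingHom.coe_coe, map_add,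
    Matrix.add_apply]
  congr 1
  · split_ifs <;> simp
  · simp [Matrix.algebraMap_matrix_apply]

end Abstract2

end Part2

section Part3

section Abstract3
open Polynomial Filter Topology

lemma tendsto_ofReal_inv : Tendsto (fun s : ℝ => (s : ℂ)⁻¹) atTop (𝓝 0) := by
  have : Tendsto (fun s : ℝ => ((s⁻¹ : ℝ) : ℂ)) atTop (𝓝 ((0 : ℝ) : ℂ)) :=
    (Complex.continuous_ofReal.tendsto 0).comp tendsto_inv_atTop_zero
  simpa using this

lemma scaled_tendsto (x : ℝ → ℂ) (l : ℂ) (R : ℝ) (hx : ∀ s, ‖x s - s * l‖ ≤ R) :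
    Tendsto (fun s : ℝ => x s * (s : ℂ)⁻¹) atTop (𝓝 l) := by
  rw [tendsto_iff_norm_sub_tendsto_zero]
  have h0 : Tendsto (fun s : ℝ => R * s⁻¹) atTop (𝓝 0) := by
    simpa using tendsto_inv_atTop_zero.const_mul R
  refine squeeze_zero' (Eventually.of_forall fun s => norm_nonneg _) ?_ h0
  filter_upwards [eventually_gt_atTop (0 : ℝ)] with s hs
  have hsC : (s : ℂ) ≠ 0 := by exact_mod_cast hs.ne'
  have : x s * (s : ℂ)⁻¹ - l = (x s - s * l) * (s : ℂ)⁻¹ := by field_simp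
  rw [this, norm_mul, norm_inv, Complex.norm_real, Real.norm_of_nonneg hs.le]
  have := hx s
  gcongr

lemma eval_scaled_tendsto (f : ℂ[X]) (hf : f.Monic) (x : ℝ → ℂ) (l : ℂ)
    (hx : Tendsto (fun s : ℝ => x s * (s : ℂ)⁻¹) atTop (𝓝 l)) :
    Tendsto (fun s : ℝ => f.eval (x s) * ((s : ℂ)⁻¹) ^ f.natDegree) atTop (𝓝 (l ^ f.natDegree)) := by
  have h1 : Tendsto (fun s : ℝ => ∑ i ∈ Finset.range (f.natDegree + 1),
      f.coeff i * (x s * (s : ℂ)⁻¹) ^ i * ((s : ℂ)⁻¹) ^ (f.natDegree - i)) atTop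
      (𝓝 (∑ i ∈ Finset.range (f.natDegree + 1), f.coeff i * l ^ i * 0 ^ (f.natDegree - i))) :=
    tendsto_finsetSum _ fun i _ => (tendsto_const_nhds.mul (hx.pow i)).mul
      (tendsto_ofReal_inv.pow _)
  have h2 : ∑ i ∈ Finset.range (f.natDegree + 1), f.coeff i * l ^ i * 0 ^ (f.natDegree - i) =
      l ^ f.natDegree := by
    rw [Finset.sum_range_succ, Finset.sum_eq_zero]
    · simp [hf]
    · intro i hi
      rw [zero_pow, mul_zero]
      have := Finset.mem_range.1 hi
      omega
  rw [h2] at h1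
  refine h1.congr fun s => ?_
  rw [Polynomial.eval_eq_sum_range, Finset.sum_mul]
  refine Finset.sum_congr rfl fun i hi => ?_
  have : f.natDegree = i + (f.natDegree - i) := by
    have := Finset.mem_range.1 hi
    omega
  conv_rhs => rw [this, pow_add]
  rw [mul_pow]
  ring

lemma divdiff_tendsto (f : ℂ[X]) (hf : f.Monic) (x y : ℝ → ℂ) (l : ℂ)
    (hx : Tendsto (fun s : ℝ => x s * (s : ℂ)⁻¹) atTop (𝓝 l))
    (hy : Tendsto (fun s : ℝ => y s * (s : ℂ)⁻¹) atTop (𝓝 l)) :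
    Tendsto (fun s : ℝ => (∑ i ∈ Finset.range (f.natDegree + 1), f.coeff i *
        ∑ j ∈ Finset.range i, x s ^ j * y s ^ (i - 1 - j)) * ((s : ℂ)⁻¹) ^ (f.natDegree - 1)) atTop
      (𝓝 (f.natDegree * l ^ (f.natDegree - 1))) := by
  have h1 : Tendsto (fun s : ℝ => ∑ i ∈ Finset.range (f.natDegree + 1),
      f.coeff i * (∑ j ∈ Finset.range i, (x s * (s : ℂ)⁻¹) ^ j * (y s * (s : ℂ)⁻¹) ^ (i - 1 - j))
        * ((s : ℂ)⁻¹) ^ (f.natDegree - i)) atTop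
      (𝓝 (∑ i ∈ Finset.range (f.natDegree + 1), f.coeff i *
        (∑ j ∈ Finset.range i, l ^ j * l ^ (i - 1 - j)) * 0 ^ (f.natDegree - i))) :=
    tendsto_finsetSum _ fun i _ => (tendsto_const_nhds.mul (tendsto_finsetSum _ fun j _ =>
      (hx.pow j).mul (hy.pow _))).mul (tendsto_ofReal_inv.pow _)
  have h2 : ∑ i ∈ Finset.range (f.natDegree + 1), f.coeff i *
        (∑ j ∈ Finset.range i, l ^ j * l ^ (i - 1 - j)) * 0 ^ (f.natDegree - i) =
      f.natDegree * l ^ (f.natDegree - 1) := by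
    rw [Finset.sum_range_succ, Finset.sum_eq_zero]
    · simp only [zero_add, hf.coeff_natDegree, one_mul, Nat.sub_self, pow_zero, mul_one]
      rw [Finset.sum_congr rfl (g := fun _ => l ^ (f.natDegree - 1))]
      · simp
      · intro j hj
        rw [← pow_add]
        congr 1
        have := Finset.mem_range.1 hj
        omega
    · intro i hi
      rw [zero_pow, mul_zero]
      have := Finset.mem_range.1 hi
      omega
  rw [h2] at h1
  refine h1.congr fun s => ?_
  rw [Finset.sum_mul]
  refine Finset.sum_congr rfl fun i hi => ?_
  rw [mul_assoc, mul_assoc, Finset.sum_mul, Finset.sum_mul]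
  congr 1
  refine Finset.sum_congr rfl fun j hj => ?_
  have : f.natDegree - 1 = j + ((i - 1 - j) + (f.natDegree - i)) := by
    have := Finset.mem_range.1 hi
    have := Finset.mem_range.1 hj
    omega
  conv_rhs => rw [this, pow_add, pow_add]
  rw [mul_pow, mul_pow]
  ring

lemma inj_large {W : Type*} [Finite W] (f : ℂ[X]) (hf : f.Monic) (hq : 0 < f.natDegree)
    (l : W → ℂ) (hl : ∀ n, l n ≠ 0) (hd : ∀ n m, n ≠ m → l n ^ f.natDegree ≠ l m ^ f.natDegree)
    (R : ℝ) (hR : 0 ≤ R) :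
    ∀ᶠ s : ℝ in atTop, ∀ n m x y, ‖x - s * l n‖ ≤ R → ‖y - s * l m‖ ≤ R →
      f.eval x = f.eval y → x = y := by
  rw [eventually_all]; intro n
  rw [eventually_all]; intro m
  have hch : ∀ s : ℝ, ∃ x y : ℂ, ‖x - s * l n‖ ≤ R ∧ ‖y - s * l m‖ ≤ R ∧
      ((∃ x y : ℂ, ‖x - s * l n‖ ≤ R ∧ ‖y - s * l m‖ ≤ R ∧ f.eval x = f.eval y ∧ x ≠ y) →
        f.eval x = f.eval y ∧ x ≠ y) := by
    intro s
    by_cases h : ∃ x y : ℂ, ‖x - s * l n‖ ≤ R ∧ ‖y - s * l m‖ ≤ R ∧ f.eval x = f.eval y ∧ x ≠ y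
    · obtain ⟨x, y, h1, h2, h3⟩ := h
      exact ⟨x, y, h1, h2, fun _ => h3⟩
    · exact ⟨s * l n, s * l m, by simpa, by simpa, fun h' => absurd h' h⟩
  choose x y hx hy hxy using hch
  have hx' := scaled_tendsto x (l n) R hx
  have hy' := scaled_tendsto y (l m) R hy
  have key : ∀ᶠ s : ℝ in atTop, f.eval (x s) = f.eval (y s) → x s = y s := by
    by_cases hnm : n = m
    · subst hnm
      have h1 := divdiff_tendsto f hf x y (l n) hx' hy'
      have h2 : (f.natDegree * l n ^ (f.natDegree - 1) : ℂ) ≠ 0 :=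
        mul_ne_zero (by exact_mod_cast hq.ne') (pow_ne_zero _ (hl n))
      filter_upwards [h1.eventually_ne h2] with s hs heq
      have h3 : f.eval (x s) - f.eval (y s) = (∑ i ∈ Finset.range (f.natDegree + 1), f.coeff i *
        ∑ j ∈ Finset.range i, x s ^ j * y s ^ (i - 1 - j)) * (x s - y s) := by
        rw [Polynomial.eval_eq_sum_range, Polynomial.eval_eq_sum_range, ← Finset.sum_sub_distrib,
          Finset.sum_mul]
        refine Finset.sum_congr rfl fun i _ => ?_
        rw [mul_assoc, (Commute.all (x s) (y s)).geom_sum₂_mul]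
        ring
      rw [heq, sub_self] at h3
      rcases mul_eq_zero.1 h3.symm with h | h
      · exact absurd (by rw [h, zero_mul]) hs
      · exact sub_eq_zero.1 h
    · have h1 := (eval_scaled_tendsto f hf x _ hx').sub (eval_scaled_tendsto f hf y _ hy')
      filter_upwards [h1.eventually_ne (sub_ne_zero.2 (hd n m hnm))] with s hs heq
      exact absurd (by rw [heq, sub_self]) hs
  filter_upwards [key] with s hs x' y' h1 h2 h3
  by_contra h4
  obtain ⟨h5, h6⟩ := hxy s ⟨x', y', h1, h2, h3, h4⟩
  exact h6 (hs h5)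

lemma charpoly_eq_of_prod {n : Type*} [Fintype n] [DecidableEq n] (A B : Matrix n n ℂ) (f : ℂ → ℂ)
    (h : ∀ E : ℂ, (A.charpoly.roots.map fun x => E + f x).prod =
      (B.charpoly.roots.map fun x => E + f x).prod)
    (hinj : ∀ x y, (x ∈ A.charpoly.roots ∨ x ∈ B.charpoly.roots) →
      (y ∈ A.charpoly.roots ∨ y ∈ B.charpoly.roots) → f x = f y → x = y) :
    A.charpoly = B.charpoly := by
  have hpoly : ((A.charpoly.roots.map fun x => - f x).map fun a => X - C a).prod =
      ((B.charpoly.roots.map fun x => - f x).map fun a => X - C a).prod := by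
    apply Polynomial.funext
    intro E
    simpa [eval_multiset_prod] using h E
  have hr := congrArg Polynomial.roots hpoly
  rw [roots_multiset_prod_X_sub_C, roots_multiset_prod_X_sub_C] at hr
  have hroots : A.charpoly.roots = B.charpoly.roots := by
    classical
    ext a
    by_cases ha : a ∈ A.charpoly.roots ∨ a ∈ B.charpoly.roots
    · have hcount : ∀ s : Multiset ℂ, (∀ x ∈ s, x ∈ A.charpoly.roots ∨ x ∈ B.charpoly.roots) →
          s.count a = (s.map fun x => - f x).count (- f a) := by
        intro s hs
        induction s using Multiset.induction_on with
        | empty => simp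
        | cons b s ih =>
          rw [Multiset.map_cons, Multiset.count_cons, Multiset.count_cons,
            ih fun x hx => hs x (by simp [hx])]
          congr 1
          by_cases hab : a = b
          · simp [hab]
          · have : ¬ (- f a = - f b) := fun h' =>
              hab (hinj a b ha (hs b (by simp)) (neg_injective h'))
            simp only [hab, this, if_false]
      rw [hcount _ fun x hx => Or.inl hx, hcount _ fun x hx => Or.inr hx, hr]
    · push Not at ha
      rw [Multiset.count_eq_zero_of_notMem ha.1, Multiset.count_eq_zero_of_notMem ha.2]
  have e1 := (IsAlgClosed.splits A.charpoly).eq_prod_roots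
  have e2 := (IsAlgClosed.splits B.charpoly).eq_prod_roots
  rw [(Matrix.charpoly_monic _).leadingCoeff] at e1 e2
  rw [e1, e2, hroots]

lemma generic_zero {d : ℕ} {I : Type*} [Fintype I] (u : I → Fin d → ℂ) (hu : ∀ i, u i ≠ 0)
    (p : MvPolynomial (Fin d) ℂ)
    (h : ∀ a : Fin d → ℂ, (∀ j, a j ≠ 0) → (∀ i, ∑ j, u i j * a j ≠ 0) →
      ∀ᶠ s : ℝ in atTop, MvPolynomial.eval (fun j => (s : ℂ) * a j) p = 0) : p = 0 := by
  have h1 : ∀ a : Fin d → ℂ, (∀ j, a j ≠ 0) → (∀ i, ∑ j, u i j * a j ≠ 0) →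
      MvPolynomial.eval a p = 0 := by
    intro a ha hi
    set P : ℂ[X] := MvPolynomial.aeval (fun j => C (a j) * X) p with hP
    have hev : ∀ t : ℂ, P.eval t = MvPolynomial.eval (fun j => t * a j) p := by
      intro t
      rw [hP, ← Polynomial.coe_evalRingHom, MvPolynomial.aeval_def, MvPolynomial.hom_eval₂]
      rw [MvPolynomial.eval, MvPolynomial.coe_eval₂Hom]
      congr 1
      · ext x; simp
      · funext j
        simp
        ring
    have hP0 : P = 0 := by
      obtain ⟨s₀, hs₀⟩ := eventually_atTop.1 (h a ha hi)
      apply Polynomial.eq_zero_of_infinite_isRoot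
      refine Set.Infinite.mono (s := (fun s : ℝ => (s : ℂ)) '' Set.Ici s₀) ?_ ?_
      · rintro _ ⟨s, hs, rfl⟩
        simp only [Set.mem_ofPred_eq, IsRoot.def, hev]
        exact hs₀ s hs
      · exact (Set.Ici_infinite s₀).image (Complex.ofReal_injective.injOn)
    have := hev 1
    rw [hP0] at this
    simpa using this.symm
  have h2 : p * ((∏ j, MvPolynomial.X j) *
      ∏ i, (∑ j, MvPolynomial.C (u i j) * MvPolynomial.X j)) = 0 := by
    apply MvPolynomial.funext
    intro a
    simp only [map_mul, map_prod, map_sum, MvPolynomial.eval_X, MvPolynomial.eval_C, map_zero]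
    by_cases ha : ∀ j, a j ≠ 0
    · by_cases hi : ∀ i, ∑ j, u i j * a j ≠ 0
      · rw [h1 a ha hi, zero_mul]
      · push Not at hi
        obtain ⟨i, hi⟩ := hi
        rw [Finset.prod_eq_zero (Finset.mem_univ i) hi]; simp
    · push Not at ha
      obtain ⟨j, hj⟩ := ha
      rw [Finset.prod_eq_zero (Finset.mem_univ j) hj]; simp
  rcases mul_eq_zero.1 h2 with h3 | h3
  · exact h3
  exfalso
  rcases mul_eq_zero.1 h3 with h3 | h3
  · obtain ⟨j, -, hj⟩ := Finset.prod_eq_zero_iff.1 h3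
    exact MvPolynomial.X_ne_zero j hj
  · obtain ⟨i, -, hi⟩ := Finset.prod_eq_zero_iff.1 h3
    apply hu i
    funext k
    have := congrArg (MvPolynomial.eval (Pi.single k (1 : ℂ))) hi
    simpa [Pi.single_apply] using this

end Abstract3

end Part3

section Part4

section Fourier

def ee (q : ℕ) (x : ℤ) : ℂ := Complex.exp (2 * Real.pi * Complex.I * (x : ℂ) / (q : ℂ))

lemma ee_add (q : ℕ) (x y : ℤ) : ee q (x + y) = ee q x * ee q y := by
  unfold ee; rw [← Complex.exp_add]; congr 1; push_cast; ring

@[simp] lemma ee_zero (q : ℕ) : ee q 0 = 1 := by simp [ee]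

lemma ee_ne_zero (q : ℕ) (x : ℤ) : ee q x ≠ 0 := Complex.exp_ne_zero _

lemma ee_neg (q : ℕ) (x : ℤ) : ee q (-x) = (ee q x)⁻¹ := by
  unfold ee; rw [← Complex.exp_neg]; congr 1; push_cast; ring

lemma ee_sub (q : ℕ) (x y : ℤ) : ee q (x - y) = ee q x * (ee q y)⁻¹ := by
  rw [sub_eq_add_neg, ee_add, ee_neg]

lemma ee_natmul (q : ℕ) (x : ℕ) (m : ℤ) : ee q (x * m) = ee q m ^ x := by
  unfold ee; rw [← Complex.exp_nat_mul]; congr 1; push_cast; ring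

lemma ee_norm (q : ℕ) (x : ℤ) : ‖ee q x‖ = 1 := by
  unfold ee
  have : (2 * Real.pi * Complex.I * (x : ℂ) / (q : ℂ)) = ((2 * Real.pi * x / q : ℝ) : ℂ) * Complex.I := by
    push_cast; ring
  rw [this, Complex.norm_exp_ofReal_mul_I]

lemma ee_conj (q : ℕ) (x : ℤ) : (starRingEnd ℂ) (ee q x) = ee q (-x) := by
  unfold ee
  rw [← Complex.exp_conj]
  congr 1
  simp [Complex.conj_ofNat]

lemma ee_eq_one_iff (q : ℕ) (hq : 0 < q) (x : ℤ) : ee q x = 1 ↔ (q : ℤ) ∣ x := by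
  unfold ee
  rw [Complex.exp_eq_one_iff]
  have hpi : (2 * Real.pi * Complex.I : ℂ) ≠ 0 := Complex.two_pi_I_ne_zero
  have hqC : (q : ℂ) ≠ 0 := by exact_mod_cast hq.ne'
  constructor
  · rintro ⟨n, hn⟩
    refine ⟨n, ?_⟩
    rw [div_eq_iff hqC] at hn
    have : (2 * Real.pi * Complex.I : ℂ) * (x : ℂ) = (2 * Real.pi * Complex.I) * (q * n) := by
      rw [hn]; ring
    have := mul_left_cancel₀ hpi this
    exact_mod_cast this
  · rintro ⟨n, rfl⟩
    refine ⟨n, ?_⟩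
    push_cast
    field_simp

lemma ee_pow (q : ℕ) (hq : 0 < q) (x : ℤ) : ee q x ^ q = 1 := by
  rw [← ee_natmul, ee_eq_one_iff q hq]
  exact dvd_mul_right _ _

lemma ee_periodic (q : ℕ) (hq : 0 < q) (x y : ℤ) (h : (q : ℤ) ∣ x - y) : ee q x = ee q y := by
  have := (ee_eq_one_iff q hq (x - y)).2 h
  have h2 : x = (x - y) + y := by ring
  rw [h2, ee_add, this, one_mul]

lemma ee_inj (q : ℕ) (x y : Fin q) (h : ee q (x : ℕ) = ee q (y : ℕ)) : x = y := by
  have hq : 0 < q := x.pos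
  have h1 : ee q ((x : ℕ) - (y : ℕ)) = 1 := by
    rw [ee_sub, h, mul_inv_cancel₀ (ee_ne_zero _ _)]
  rw [ee_eq_one_iff q hq] at h1
  have h2 := Int.eq_zero_of_abs_lt_dvd h1 (by
    rw [abs_lt]; constructor <;> have := x.2 <;> have := y.2 <;> omega)
  apply Fin.ext
  omega

lemma ee_sum (q : ℕ) (hq : 0 < q) (m : ℤ) :
    ∑ x : Fin q, ee q ((x : ℕ) * m) = if (q : ℤ) ∣ m then (q : ℂ) else 0 := by
  simp only [ee_natmul]
  rw [Fin.sum_univ_eq_sum_range (fun i => ee q m ^ i)]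
  split_ifs with h
  · rw [(ee_eq_one_iff q hq m).2 h]; simp
  · have : ee q m ≠ 1 := fun h' => h ((ee_eq_one_iff q hq m).1 h')
    rw [geom_sum_eq this, ee_pow q hq, sub_self, zero_div]

lemma rho_eq (d : ℕ) (q : Fin d → ℕ) (j : Fin d) (m : ℤ) : rho d q j m = ee (q j) m := rfl

lemma dft_eq (d : ℕ) (q : Fin d → ℕ) (V : (Fin d → ℤ) → ℝ) (l : Fin d → ℤ) :
    dft d q V l = (1 / ∏ j, (q j : ℂ)) *
      ∑ n : Cell d q, (V (fun j => ((n j : ℕ) : ℤ)) : ℂ) * ∏ j, ee (q j) (-(l j * (n j : ℕ))) := by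
  unfold dft ee
  congr 1
  refine Finset.sum_congr rfl fun n _ => ?_
  rw [← Complex.exp_sum]
  congr 2
  rw [Finset.mul_sum]
  refine Finset.sum_congr rfl fun j _ => ?_
  push_cast
  ring

lemma dft_periodic (d : ℕ) (q : Fin d → ℕ) (hq : ∀ j, 0 < q j) (V : (Fin d → ℤ) → ℝ)
    (l l' : Fin d → ℤ) (h : ∀ j, (q j : ℤ) ∣ l j - l' j) : dft d q V l = dft d q V l' := by
  rw [dft_eq, dft_eq]
  congr 1
  refine Finset.sum_congr rfl fun n _ => ?_
  congr 1
  refine Finset.prod_congr rfl fun j _ => ?_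
  apply ee_periodic _ (hq j)
  have : -(l j * ((n j : ℕ) : ℤ)) - -(l' j * ((n j : ℕ) : ℤ)) = (l j - l' j) * (-((n j : ℕ) : ℤ)) := by
    ring
  rw [this]
  exact (h j).mul_right _

lemma dft_neg (d : ℕ) (q : Fin d → ℕ) (V : (Fin d → ℤ) → ℝ)
    (l : Fin d → ℤ) : dft d q V (-l) = (starRingEnd ℂ) (dft d q V l) := by
  rw [dft_eq, dft_eq]
  simp only [map_mul, map_div₀, map_one, map_prod, map_sum, Complex.conj_natCast,
    Complex.conj_ofReal, ee_conj]
  simp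

lemma dft_sum (d : ℕ) (q : Fin d → ℕ) {r : ℕ} (F : Fin r → (Fin d → ℤ) → ℝ) (l : Fin d → ℤ) :
    dft d q (fun n => ∑ j, F j n) l = ∑ j, dft d q (F j) l := by
  unfold dft
  rw [← Finset.mul_sum, Finset.sum_comm]
  congr 1
  refine Finset.sum_congr rfl fun n _ => ?_
  push_cast
  rw [Finset.sum_mul]

/-- The Fourier coefficients of a function independent of coordinate `t` vanish if `l_t ≠ 0`. -/
lemma dft_vanish (d : ℕ) (q : Fin d → ℕ) (hq : ∀ j, 0 < q j) (V : (Fin d → ℤ) → ℝ)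
    (l : Fin d → ℤ) (t : Fin d) (hV : ∀ n x, V (Function.update n t x) = V n)
    (hl : ¬ (q t : ℤ) ∣ l t) : dft d q V l = 0 := by
  rw [dft_eq]
  have : NeZero (q t) := ⟨(hq t).ne'⟩
  let σ : Cell d q → Cell d q := fun n => Function.update n t (n t + 1)
  have hσ : Function.Bijective σ := by
    rw [← Finite.injective_iff_bijective]
    intro n m h
    funext j
    by_cases hj : j = t
    · subst hj
      have := congrFun h j
      simpa [σ] using this
    · have := congrFun h j
      simpa [σ, hj] using this
  set S := ∑ n : Cell d q, (V (fun j => ((n j : ℕ) : ℤ)) : ℂ) * ∏ j, ee (q j) (-(l j * (n j : ℕ)))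
    with hS
  have h1 : S = S * ee (q t) (-(l t)) := by
    conv_lhs => rw [hS]
    rw [← hσ.sum_comp, hS, Finset.sum_mul]
    refine Finset.sum_congr rfl fun n _ => ?_
    have e1 : (fun j => ((σ n j : ℕ) : ℤ)) =
        Function.update (fun j => ((n j : ℕ) : ℤ)) t ((σ n t : ℕ) : ℤ) := by
      funext j
      by_cases hj : j = t
      · subst hj; simp
      · simp [σ, hj]
    rw [e1, hV, mul_assoc]
    congr 1
    rw [← Finset.mul_prod_erase _ _ (Finset.mem_univ t),
      ← Finset.mul_prod_erase _ (fun j => ee (q j) (-(l j * (n j : ℕ)))) (Finset.mem_univ t)]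
    have e2 : ∏ x ∈ Finset.univ.erase t, ee (q x) (-(l x * ((σ n x : ℕ) : ℤ))) =
        ∏ x ∈ Finset.univ.erase t, ee (q x) (-(l x * ((n x : ℕ) : ℤ))) := by
      refine Finset.prod_congr rfl fun j hj => ?_
      simp [σ, Finset.ne_of_mem_erase hj]
    have e3 : ee (q t) (-(l t * ((σ n t : ℕ) : ℤ))) =
        ee (q t) (-(l t * ((n t : ℕ) : ℤ))) * ee (q t) (-(l t)) := by
      rw [← ee_add]
      apply ee_periodic _ (hq t)
      have e4 : (q t : ℤ) ∣ ((n t : ℕ) : ℤ) + 1 - ((σ n t : ℕ) : ℤ) := by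
        simp only [σ, Function.update_self, Fin.val_add, Fin.val_one', Nat.add_mod_mod]
        push_cast
        exact Int.dvd_self_sub_emod
      have e5 : -(l t * ((σ n t : ℕ) : ℤ)) - (-(l t * ((n t : ℕ) : ℤ)) + -(l t)) =
        (((n t : ℕ) : ℤ) + 1 - ((σ n t : ℕ) : ℤ)) * l t := by ring
      rw [e5]
      exact e4.mul_right _
    rw [e2, e3]
    ring
  have h2 : ee (q t) (-(l t)) ≠ 1 := by
    rw [ne_eq, ee_eq_one_iff _ (hq t), dvd_neg]
    exact hl
  have h3 : S * (1 - ee (q t) (-(l t))) = 0 := by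
    rw [mul_sub, mul_one, ← h1, sub_self]
  rcases mul_eq_zero.1 h3 with h | h
  · rw [h, mul_zero]
  · exact absurd (sub_eq_zero.1 h).symm h2

lemma fourier_inversion (d : ℕ) (q : Fin d → ℕ) (hq : ∀ j, 0 < q j) (V : (Fin d → ℤ) → ℝ)
    (hV : IsPeriodicPotential d q V) (n₀ : Fin d → ℤ) :
    (V n₀ : ℂ) = ∑ l : Cell d q, dft d q V (fun j => ((l j : ℕ) : ℤ)) *
      ∏ j, ee (q j) ((l j : ℕ) * n₀ j) := by
  have hqC : (∏ j, (q j : ℂ)) ≠ 0 :=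
    Finset.prod_ne_zero_iff.2 fun j _ => by exact_mod_cast (hq j).ne'
  -- the reduction of n₀ modulo Γ
  have hmod : ∀ j, (n₀ j % (q j : ℤ)).toNat < q j := fun j => by
    have h1 := Int.emod_nonneg (n₀ j) (b := (q j : ℤ)) (by have := hq j; omega)
    have h2 := Int.emod_lt_of_pos (n₀ j) (b := (q j : ℤ)) (by have := hq j; omega)
    omega
  let c : Cell d q := fun j => ⟨(n₀ j % (q j : ℤ)).toNat, hmod j⟩
  have hc : ∀ j, ((c j : ℕ) : ℤ) = n₀ j % (q j : ℤ) := fun j =>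
    Int.toNat_of_nonneg (Int.emod_nonneg (n₀ j) (b := (q j : ℤ)) (by have := hq j; omega))
  have hVc : V n₀ = V (fun j => ((c j : ℕ) : ℤ)) := by
    have h := hV (fun j => ((c j : ℕ) : ℤ)) (fun j => n₀ j - ((c j : ℕ) : ℤ)) (fun j => by
      rw [hc]; exact Int.dvd_self_sub_emod)
    rw [← h]
    congr 1
    funext j
    simp
  have hsum : ∀ n : Cell d q, ∑ l : Cell d q, ∏ j, ee (q j) ((l j : ℕ) * (n₀ j - (n j : ℕ))) =
      if n = c then ∏ j, (q j : ℂ) else 0 := by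
    intro n
    have h1 := (Finset.prod_univ_sum (fun j : Fin d => (Finset.univ : Finset (Fin (q j))))
      (fun j x => ee (q j) ((x : ℕ) * (n₀ j - (n j : ℕ))))).symm
    rw [Fintype.piFinset_univ] at h1
    rw [h1]
    simp only [ee_sum _ (hq _)]
    split_ifs with h
    · refine Finset.prod_congr rfl fun j _ => ?_
      rw [if_pos]
      rw [h, hc]
      exact Int.dvd_self_sub_emod
    · have : ∃ j, n j ≠ c j := by
        by_contra hcon
        push Not at hcon
        exact h (funext hcon)
      obtain ⟨j, hj⟩ := this
      apply Finset.prod_eq_zero (Finset.mem_univ j)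
      rw [if_neg]
      intro hdvd
      apply hj
      have h2 : (q j : ℤ) ∣ ((c j : ℕ) : ℤ) - (n j : ℕ) := by
        have h3 : (q j : ℤ) ∣ n₀ j - (c j : ℕ) := by rw [hc]; exact Int.dvd_self_sub_emod
        have h5 : ((c j : ℕ) : ℤ) - (n j : ℕ) = (n₀ j - (n j : ℕ)) - (n₀ j - (c j : ℕ)) := by ring
        rw [h5]
        exact dvd_sub hdvd h3
      have h4 := Int.eq_zero_of_abs_lt_dvd h2 (by
        rw [abs_lt]; constructor <;> have := (n j).2 <;> have := (c j).2 <;> omega)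
      apply Fin.ext
      omega
  have h1 : ∑ l : Cell d q, dft d q V (fun j => ((l j : ℕ) : ℤ)) * ∏ j, ee (q j) ((l j : ℕ) * n₀ j)
      = (1 / ∏ j, (q j : ℂ)) * ∑ n : Cell d q, (V (fun j => ((n j : ℕ) : ℤ)) : ℂ) *
        ∑ l : Cell d q, ∏ j, ee (q j) ((l j : ℕ) * (n₀ j - (n j : ℕ))) := by
    simp only [dft_eq, Finset.mul_sum, Finset.sum_mul]
    rw [Finset.sum_comm]
    refine Finset.sum_congr rfl fun n _ => Finset.sum_congr rfl fun l _ => ?_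
    have : ∏ j, ee (q j) ((l j : ℕ) * (n₀ j - (n j : ℕ))) =
        (∏ j, ee (q j) (-(((l j : ℕ) : ℤ) * (n j : ℕ)))) * ∏ j, ee (q j) ((l j : ℕ) * n₀ j) := by
      rw [← Finset.prod_mul_distrib]
      refine Finset.prod_congr rfl fun j _ => ?_
      rw [← ee_add]
      congr 1
      ring
    rw [this]
    ring
  rw [h1]
  simp only [hsum, mul_ite, mul_zero]
  rw [Finset.sum_ite_eq' Finset.univ c]
  simp only [Finset.mem_univ, if_true]
  rw [hVc]
  field_simp

end Fourier

end Part4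

section Part5

/-- Overwrite the coordinates of `n` in the range of `e` by those of `m`. -/
def ovc {d : ℕ} {q : Fin d → ℕ} {k : ℕ} (e : Fin k → Fin d)
    (m : Cell k (fun i => q (e i))) (n : Cell d q) : Cell d q := by
  classical
  exact fun j => if h : ∃ i, e i = j then ⟨(m h.choose : ℕ), by
    have h1 : (m h.choose : ℕ) < q (e h.choose) := (m h.choose).2
    have h2 := h.choose_spec
    have h3 : q (e h.choose) = q j := by rw [h2]
    omega⟩ else n j

lemma ovc_mem {d : ℕ} {q : Fin d → ℕ} {k : ℕ} (e : Fin k → Fin d) (he : Function.Injective e)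
    (m : Cell k (fun i => q (e i))) (n : Cell d q) (i : Fin k) : ovc e m n (e i) = m i := by
  have h : ∃ i', e i' = e i := ⟨i, rfl⟩
  apply Fin.ext
  have h2 : h.choose = i := he h.choose_spec
  have : ((ovc e m n (e i) : Fin (q (e i))) : ℕ) = (m h.choose : ℕ) := by
    unfold ovc
    rw [dif_pos h]
  rw [this, h2]

lemma ovc_not_mem {d : ℕ} {q : Fin d → ℕ} {k : ℕ} (e : Fin k → Fin d)
    (m : Cell k (fun i => q (e i))) (n : Cell d q) (j : Fin d) (hj : ∀ i, e i ≠ j) :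
    ovc e m n j = n j := by
  unfold ovc
  rw [dif_neg]
  rintro ⟨i, hi⟩
  exact hj i hi

lemma ovc_ovc {d : ℕ} {q : Fin d → ℕ} {k : ℕ} (e : Fin k → Fin d) (he : Function.Injective e)
    (m : Cell k (fun i => q (e i))) (n : Cell d q) :
    ovc e (fun i => n (e i)) (ovc e m n) = n := by
  funext j
  by_cases hj : ∃ i, e i = j
  · obtain ⟨i, rfl⟩ := hj
    rw [ovc_mem e he]
  · push Not at hj
    rw [ovc_not_mem e _ _ j hj, ovc_not_mem e _ _ j hj]

lemma extend_eq_ovc {d : ℕ} {q : Fin d → ℕ} {k : ℕ} (e : Fin k → Fin d)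
    (he : Function.Injective e) (m : Cell k (fun i => q (e i))) (n : Cell d q) :
    Function.extend e (fun i => ((m i : ℕ) : ℤ)) (fun j => ((n j : ℕ) : ℤ)) =
      fun j => ((ovc e m n j : ℕ) : ℤ) := by
  funext j
  by_cases hj : ∃ i, e i = j
  · obtain ⟨i, rfl⟩ := hj
    rw [he.extend_apply, ovc_mem e he]
  · rw [Function.extend_apply' _ _ _ hj]
    push Not at hj
    rw [ovc_not_mem e _ _ j hj]

/-- The average of `V` over the coordinates outside the range of `e`. -/
def avgPot {d : ℕ} (q : Fin d → ℕ) {k : ℕ} (e : Fin k → Fin d) (V : (Fin d → ℤ) → ℝ) :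
    (Fin k → ℤ) → ℝ := fun m =>
  (1 / ∏ j, (q j : ℝ)) * ∑ n : Cell d q, V (Function.extend e m (fun j => ((n j : ℕ) : ℤ)))

lemma avgPot_periodic {d : ℕ} (q : Fin d → ℕ) {k : ℕ} (e : Fin k → Fin d)
    (he : Function.Injective e) (V : (Fin d → ℤ) → ℝ) (hV : IsPeriodicPotential d q V) :
    IsPeriodicPotential k (fun i => q (e i)) (avgPot q e V) := by
  intro n γ hγ
  unfold avgPot
  congr 1
  refine Finset.sum_congr rfl fun c _ => ?_
  rw [← hV (Function.extend e n fun j => ((c j : ℕ) : ℤ)) (Function.extend e γ 0)]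
  · congr 1
    funext j
    by_cases hj : ∃ i, e i = j
    · obtain ⟨i, rfl⟩ := hj
      simp [he.extend_apply]
    · simp [Function.extend_apply' _ _ _ hj]
  · intro j
    by_cases hj : ∃ i, e i = j
    · obtain ⟨i, rfl⟩ := hj
      rw [he.extend_apply]
      exact hγ i
    · rw [Function.extend_apply' _ _ _ hj]
      simp

lemma dft_avg {d : ℕ} (q : Fin d → ℕ) (hq : ∀ j, 0 < q j) {k : ℕ} (e : Fin k → Fin d)
    (he : Function.Injective e) (V : (Fin d → ℤ) → ℝ) (l : Fin k → ℤ) :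
    dft k (fun i => q (e i)) (avgPot q e V) l = dft d q V (Function.extend e l 0) := by
  have hqC : (∏ j, (q j : ℂ)) ≠ 0 :=
    Finset.prod_ne_zero_iff.2 fun j _ => by exact_mod_cast (hq j).ne'
  have hqE : (∏ i, (q (e i) : ℂ)) ≠ 0 :=
    Finset.prod_ne_zero_iff.2 fun j _ => by exact_mod_cast (hq _).ne'
  rw [dft_eq, dft_eq]
  have h1 : ∀ n : Cell d q, ∏ j, ee (q j) (-(Function.extend e l 0 j * ((n j : ℕ) : ℤ))) =
      ∏ i, ee (q (e i)) (-(l i * ((n (e i) : ℕ) : ℤ))) := by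
    intro n
    rw [← Finset.prod_subset (Finset.subset_univ (Finset.univ.map ⟨e, he⟩)), Finset.prod_map]
    · refine Finset.prod_congr rfl fun i _ => ?_
      simp [he.extend_apply]
    · intro j _ hj
      have : ¬ ∃ i, e i = j := by simpa using hj
      rw [Function.extend_apply' _ _ _ this]
      simp
  simp only [h1]
  have h2 : ∑ m : Cell k (fun i => q (e i)), ((avgPot q e V (fun i => ((m i : ℕ) : ℤ)) : ℝ) : ℂ) *
      ∏ i, ee (q (e i)) (-(l i * ((m i : ℕ) : ℤ))) = (1 / ∏ j, (q j : ℂ)) *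
      ∑ x : Cell k (fun i => q (e i)) × Cell d q,
        (V (fun j => ((ovc e x.1 x.2 j : ℕ) : ℤ)) : ℂ) *
          ∏ i, ee (q (e i)) (-(l i * ((x.1 i : ℕ) : ℤ))) := by
    rw [Fintype.sum_prod_type, Finset.mul_sum]
    refine Finset.sum_congr rfl fun m _ => ?_
    unfold avgPot
    simp only [extend_eq_ovc e he]
    push_cast
    rw [← Finset.sum_mul, mul_assoc]
  have h3 : ∑ x : Cell k (fun i => q (e i)) × Cell d q,
        (V (fun j => ((ovc e x.1 x.2 j : ℕ) : ℤ)) : ℂ) *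
          ∏ i, ee (q (e i)) (-(l i * ((x.1 i : ℕ) : ℤ))) =
      ∑ x : Cell k (fun i => q (e i)) × Cell d q,
        (V (fun j => ((x.2 j : ℕ) : ℤ)) : ℂ) *
          ∏ i, ee (q (e i)) (-(l i * ((x.2 (e i) : ℕ) : ℤ))) := by
    let φ : Cell k (fun i => q (e i)) × Cell d q → Cell k (fun i => q (e i)) × Cell d q :=
      fun x => (fun i => x.2 (e i), ovc e x.1 x.2)
    have hφ : Function.Involutive φ := by
      rintro ⟨m, n⟩
      simp only [φ]
      rw [ovc_ovc e he]
      congr 1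
      funext i
      rw [ovc_mem e he]
    rw [← Equiv.sum_comp hφ.toPerm]
    refine Finset.sum_congr rfl fun x _ => ?_
    simp only [Function.Involutive.coe_toPerm, φ]
    rw [ovc_ovc e he]
  rw [h2, h3, Fintype.sum_prod_type]
  simp only [Finset.sum_const, Finset.card_univ, Fintype.card_pi, Fintype.card_fin, nsmul_eq_mul]
  push_cast
  field_simp

lemma cell_eq_of_dvd {d : ℕ} {q : Fin d → ℕ} (n n' : Cell d q) (j : Fin d)
    (hdvd : (q j : ℤ) ∣ ((n j : ℕ) : ℤ) - ((n' j : ℕ) : ℤ)) : n j = n' j := by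
  have h4 := Int.eq_zero_of_abs_lt_dvd hdvd (by
    rw [abs_lt]; constructor <;> have := (n j).2 <;> have := (n' j).2 <;> omega)
  apply Fin.ext
  omega

lemma dft_add_const (d : ℕ) (q : Fin d → ℕ) (hq : ∀ j, 0 < q j) (V : (Fin d → ℤ) → ℝ) (C : ℝ)
    (n n' : Cell d q) :
    dft d q (fun m => V m + C) (fun j => ((n j : ℕ) : ℤ) - ((n' j : ℕ) : ℤ)) =
      dft d q V (fun j => ((n j : ℕ) : ℤ) - ((n' j : ℕ) : ℤ)) + if n = n' then (C : ℂ) else 0 := by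
  have hqC : (∏ j, (q j : ℂ)) ≠ 0 :=
    Finset.prod_ne_zero_iff.2 fun j _ => by exact_mod_cast (hq j).ne'
  have h1 : ∀ l, dft d q (fun m => V m + C) l = dft d q V l + dft d q (fun _ => C) l := by
    intro l
    unfold dft
    rw [← mul_add, ← Finset.sum_add_distrib]
    congr 1
    refine Finset.sum_congr rfl fun n _ => ?_
    push_cast
    ring
  rw [h1]
  congr 1
  split_ifs with h
  · subst h
    rw [dft_eq]
    simp
    field_simp
  · have : ∃ j, n j ≠ n' j := by
      by_contra hcon
      push Not at hcon
      exact h (funext hcon)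
    obtain ⟨j, hj⟩ := this
    exact dft_vanish d q hq _ _ j (fun _ _ => rfl) fun hdvd => hj (cell_eq_of_dvd n n' j hdvd)

lemma floquetDet_add_const (d : ℕ) (q : Fin d → ℕ) (hq : ∀ j, 0 < q j) (V : (Fin d → ℤ) → ℝ)
    (C : ℝ) (z : Fin d → ℂ) (lam : ℂ) :
    floquetDet d q (fun m => V m + C) z lam = floquetDet d q V z (lam - C) := by
  unfold floquetDet
  congr 1
  ext n n'
  simp only [floquetMatrix, dft_add_const d q hq, Matrix.sub_apply, Matrix.smul_apply,
    Matrix.one_apply, smul_eq_mul]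
  split_ifs <;> ring

end Part5

section Part6

section Step1
open Filter Topology

lemma coprime_root (a b : ℕ) (hab : Nat.Coprime a b) (c : ℂ) (h1 : c ^ a = 1) (h2 : c ^ b = 1) :
    c = 1 := by
  have := pow_gcd_eq_one.2 ⟨h1, h2⟩
  rwa [Nat.Coprime.gcd_eq_one hab, pow_one] at this

lemma ee_ratio_pow (q : ℕ) (hq : 0 < q) (x y : ℤ) (c : ℂ) (h : ee q x = c * ee q y) :
    c ^ q = 1 := by
  have h1 := congrArg (· ^ q) h
  simp only [mul_pow, ee_pow q hq, mul_one] at h1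
  exact h1.symm

lemma nonprop {d : ℕ} {q : Fin d → ℕ} (hq : ∀ j, 0 < q j)
    (hco : ∀ i j : Fin d, i ≠ j → Nat.Coprime (q i) (q j)) (n m : Cell d q) (c : ℂ)
    (i j : Fin d) (hij : i ≠ j) (hi : ee (q i) (n i : ℕ) = c * ee (q i) (m i : ℕ))
    (hj : ee (q j) (n j : ℕ) = c * ee (q j) (m j : ℕ)) : c = 1 :=
  coprime_root _ _ (hco i j hij) c (ee_ratio_pow _ (hq i) _ _ c hi) (ee_ratio_pow _ (hq j) _ _ c hj)

lemma path_inv (ρ a b : ℂ) (hρ : ρ ≠ 0) :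
    Tendsto (fun s : ℝ => (ρ * ((s : ℂ) * a + b))⁻¹) atTop
      (𝓝 (if a = 0 then (ρ * b)⁻¹ else 0)) := by
  split_ifs with h
  · simp only [h, mul_zero, zero_add]
    exact tendsto_const_nhds
  · have h1 : Tendsto (fun s : ℝ => (s : ℂ)⁻¹ * (ρ * (a + (s : ℂ)⁻¹ * b))⁻¹) atTop
        (𝓝 (0 * (ρ * (a + 0 * b))⁻¹)) := by
      refine tendsto_ofReal_inv.mul (Tendsto.inv₀ ?_ (by simpa using ⟨hρ, h⟩))
      exact tendsto_const_nhds.mul (tendsto_const_nhds.add (tendsto_ofReal_inv.mul tendsto_const_nhds))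
    rw [zero_mul] at h1
    refine h1.congr' ?_
    filter_upwards [eventually_gt_atTop (0 : ℝ)] with s hs
    have hsC : (s : ℂ) ≠ 0 := by exact_mod_cast hs.ne'
    rw [← mul_inv]
    congr 1
    field_simp

lemma path_scaled (ρ a b : ℂ) (hρ : ρ ≠ 0) :
    Tendsto (fun s : ℝ => (s : ℂ)⁻¹ * (ρ * ((s : ℂ) * a + b) + (ρ * ((s : ℂ) * a + b))⁻¹)) atTop
      (𝓝 (ρ * a)) := by
  have h1 := (tendsto_ofReal_inv.mul (path_inv ρ a b hρ)).add
    ((tendsto_const_nhds (x := ρ)).mul ((tendsto_const_nhds (x := a)).add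
      (tendsto_ofReal_inv.mul (tendsto_const_nhds (x := b)))))
  have h2 : (0 : ℂ) * (if a = 0 then (ρ * b)⁻¹ else 0) + ρ * (a + 0 * b) = ρ * a := by ring
  rw [h2] at h1
  refine h1.congr' ?_
  filter_upwards [eventually_gt_atTop (0 : ℝ)] with s hs
  have hsC : (s : ℂ) ≠ 0 := by exact_mod_cast hs.ne'
  rw [mul_add]
  field_simp
  ring

lemma path_sum {d : ℕ} (S : Finset (Fin d)) (ρ a b : Fin d → ℂ) (hρ : ∀ t, ρ t ≠ 0)
    (κ : ℂ) :
    Tendsto (fun s : ℝ => (s : ℂ)⁻¹ * (∑ t ∈ S, (ρ t * ((s : ℂ) * a t + b t) +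
      (ρ t * ((s : ℂ) * a t + b t))⁻¹) + κ)) atTop (𝓝 (∑ t ∈ S, ρ t * a t)) := by
  simp only [mul_add _ (∑ t ∈ S, _), Finset.mul_sum]
  have h1 := (tendsto_finsetSum S fun t _ => path_scaled (ρ t) (a t) (b t) (hρ t)).add
    (tendsto_ofReal_inv.mul (tendsto_const_nhds (x := κ)))
  simpa using h1

/-- Entries of `M_V(z) - λ`. -/
lemma floquet_entry (d : ℕ) (q : Fin d → ℕ) (V : (Fin d → ℤ) → ℝ) (z : Fin d → ℂ) (lam : ℂ)
    (n m : Cell d q) :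
    (floquetMatrix d q V z - lam • (1 : Matrix (Cell d q) (Cell d q) ℂ)) n m =
      (if n = m then ∑ j, (ee (q j) (n j : ℕ) * z j + (ee (q j) (n j : ℕ) * z j)⁻¹) - lam else 0)
        + dft d q V (fun j => ((n j : ℕ) : ℤ) - ((m j : ℕ) : ℤ)) := by
  simp only [floquetMatrix, rho_eq, Matrix.sub_apply, Matrix.smul_apply, Matrix.one_apply,
    smul_eq_mul]
  split_ifs <;> ring

lemma laurent (d : ℕ) (q : Fin d → ℕ) (V : (Fin d → ℤ) → ℝ) (lam : ℂ) :
    ∃ p : MvPolynomial (Fin d) ℂ, ∀ z : Fin d → ℂ, (∀ j, z j ≠ 0) →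
      MvPolynomial.eval z p = (∏ j, z j) ^ (Fintype.card (Cell d q)) * floquetDet d q V z lam := by
  let E : Matrix (Cell d q) (Cell d q) (MvPolynomial (Fin d) ℂ) := Matrix.of fun n m =>
    (if n = m then ∑ j, (MvPolynomial.C (ee (q j) (n j : ℕ)) * MvPolynomial.X j *
      (∏ i, MvPolynomial.X i) + MvPolynomial.C (ee (q j) (n j : ℕ))⁻¹ *
        ∏ i ∈ Finset.univ.erase j, MvPolynomial.X i) - MvPolynomial.C lam * ∏ i, MvPolynomial.X i
      else 0) + MvPolynomial.C (dft d q V (fun j => ((n j : ℕ) : ℤ) - ((m j : ℕ) : ℤ))) *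
        ∏ i, MvPolynomial.X i
  refine ⟨E.det, fun z hz => ?_⟩
  rw [RingHom.map_det, floquetDet, ← Matrix.det_smul]
  congr 1
  ext n m
  rw [Matrix.smul_apply, floquet_entry]
  simp only [E, RingHom.mapMatrix_apply, Matrix.map_apply, Matrix.of_apply, smul_eq_mul]
  split_ifs with h
  · simp only [map_add, map_sub, map_mul, map_sum, map_prod, MvPolynomial.eval_C,
      MvPolynomial.eval_X]
    rw [mul_add, mul_sub, Finset.mul_sum]
    congr 1
    · congr 1
      · refine Finset.sum_congr rfl fun j _ => ?_
        rw [← Finset.mul_prod_erase Finset.univ z (Finset.mem_univ j)]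
        have := hz j
        have := ee_ne_zero (q j) (n j : ℕ)
        field_simp
      · ring
    · ring
  · simp only [map_add, map_mul, map_prod, MvPolynomial.eval_C, MvPolynomial.eval_X, map_zero]
    ring

lemma floquetDet_eq_of_generic {d : ℕ} {I : Type*} [Fintype I] (u : I → Fin d → ℂ)
    (hu : ∀ i, u i ≠ 0) (q : Fin d → ℕ) (V Y : (Fin d → ℤ) → ℝ) (lam : ℂ)
    (h : ∀ a : Fin d → ℂ, (∀ j, a j ≠ 0) → (∀ i, ∑ j, u i j * a j ≠ 0) →
      ∀ᶠ s : ℝ in atTop, floquetDet d q V (fun j => (s : ℂ) * a j) lam =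
        floquetDet d q Y (fun j => (s : ℂ) * a j) lam)
    (z : Fin d → ℂ) (hz : ∀ j, z j ≠ 0) :
    floquetDet d q V z lam = floquetDet d q Y z lam := by
  obtain ⟨p, hp⟩ := laurent d q V lam
  obtain ⟨p', hp'⟩ := laurent d q Y lam
  have h0 : p - p' = 0 := by
    refine generic_zero u hu _ fun a ha hi => ?_
    filter_upwards [h a ha hi, eventually_gt_atTop (0 : ℝ)] with s hs hs0
    have hsC : (s : ℂ) ≠ 0 := by exact_mod_cast hs0.ne'
    have hne : ∀ j, (s : ℂ) * a j ≠ 0 := fun j => mul_ne_zero hsC (ha j)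
    rw [map_sub, hp _ hne, hp' _ hne, hs, sub_self]
  have h1 := hp z hz
  rw [sub_eq_zero.1 h0, hp' z hz] at h1
  exact (mul_left_cancel₀ (pow_ne_zero _ (Finset.prod_ne_zero_iff.2 fun j _ => hz j)) h1).symm

/-- Step 1: equality of the Fermi zero sets gives equality of the determinants. -/
lemma step1 {d : ℕ} (hd : 3 ≤ d) (q : Fin d → ℕ) (hq : ∀ j, 0 < q j)
    (hco : ∀ i j : Fin d, i ≠ j → Nat.Coprime (q i) (q j))
    (V Y : (Fin d → ℤ) → ℝ) (lam : ℂ)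
    (hF : ∀ z : Fin d → ℂ, (∀ j, z j ≠ 0) → floquetDet d q V z lam = 0 →
      floquetDet d q Y z lam = 0)
    (z : Fin d → ℂ) (hz : ∀ j, z j ≠ 0) :
    floquetDet d q V z lam = floquetDet d q Y z lam := by
  let i0 : Fin d := ⟨0, by omega⟩
  let i1 : Fin d := ⟨1, by omega⟩
  let i2 : Fin d := ⟨2, by omega⟩
  have h01 : i0 ≠ i1 := by simp [i0, i1]
  have h02 : i0 ≠ i2 := by simp [i0, i2]
  have h12 : i1 ≠ i2 := by simp [i1, i2]
  let ρ : Cell d q → Fin d → ℂ := fun n t => ee (q t) (n t : ℕ)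
  have hρ : ∀ n t, ρ n t ≠ 0 := fun n t => ee_ne_zero _ _
  have hρinj : ∀ n m : Cell d q, (∀ t, ρ n t = ρ m t) → n = m := fun n m h =>
    funext fun t => ee_inj _ _ _ (h t)
  let P := {x : Cell d q × Cell d q // x.1 ≠ x.2}
  let u : Cell d q ⊕ P ⊕ P → Fin d → ℂ := fun x j => if j = i0 then 0 else
    match x with
    | .inl n => ρ n j
    | .inr (.inl x) => ρ x.1.2 i0 * ρ x.1.1 j - ρ x.1.1 i0 * ρ x.1.2 j
    | .inr (.inr x) => ρ x.1.1 i0 * ρ x.1.1 j - ρ x.1.2 i0 * ρ x.1.2 j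
  have hu : ∀ x, u x ≠ 0 := by
    intro x hx
    have hx' : ∀ j, j ≠ i0 → u x j = 0 := fun j _ => by rw [hx]; rfl
    rcases x with n | ⟨⟨n, m⟩, hnm⟩ | ⟨⟨n, m⟩, hnm⟩
    · have := hx' i1 h01.symm
      simp only [u, if_neg h01.symm] at this
      exact hρ _ _ this
    · apply hnm
      have key : ∀ j, ρ n j = ρ n i0 / ρ m i0 * ρ m j := by
        intro j
        by_cases hj : j = i0
        · rw [hj, div_mul_cancel₀ _ (hρ m i0)]
        · have := hx' j hj
          simp only [u, if_neg hj] at this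
          rw [div_mul_eq_mul_div, eq_div_iff (hρ m i0), mul_comm]
          exact sub_eq_zero.1 this
      have hc := nonprop hq hco n m _ i0 i1 h01 (key i0) (key i1)
      refine hρinj _ _ fun t => ?_
      rw [key t, hc, one_mul]
    · apply hnm
      have key : ∀ j, j ≠ i0 → ρ n j = ρ m i0 / ρ n i0 * ρ m j := by
        intro j hj
        have := hx' j hj
        simp only [u, if_neg hj] at this
        rw [div_mul_eq_mul_div, eq_div_iff (hρ n i0), mul_comm]
        exact sub_eq_zero.1 this
      have hc := nonprop hq hco n m _ i1 i2 h12 (key i1 h01.symm) (key i2 h02.symm)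
      refine hρinj _ _ fun t => ?_
      by_cases ht : t = i0
      · rw [ht]
        exact ((div_eq_one_iff_eq (hρ n i0)).1 hc).symm
      · rw [key t ht, hc, one_mul]
  refine floquetDet_eq_of_generic u hu q V Y lam (fun a ha hi => ?_) z hz
  let B : ((Fin d → ℤ) → ℝ) → ℝ → Matrix (Cell d q) (Cell d q) ℂ := fun V s => Matrix.of fun n m =>
    (if n = m then ∑ t ∈ Finset.univ.erase i0, (ρ n t * ((s : ℂ) * a t + 0) +
      (ρ n t * ((s : ℂ) * a t + 0))⁻¹) - lam else 0)
      + dft d q V (fun j => ((n j : ℕ) : ℤ) - ((m j : ℕ) : ℤ))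
  have hB : ∀ (V : (Fin d → ℤ) → ℝ) (s : ℝ) (w : ℂ),
      floquetDet d q V (Function.update (fun j => (s : ℂ) * a j) i0 w) lam =
      Matrix.det (Matrix.diagonal (fun n => ρ n i0 * w + (ρ n i0 * w)⁻¹) + B V s) := by
    intro V s w
    rw [floquetDet]
    congr 1
    ext n m
    rw [floquet_entry, Matrix.add_apply, Matrix.diagonal_apply]
    simp only [B, Matrix.of_apply]
    split_ifs with hnm
    · rw [← Finset.add_sum_erase Finset.univ _ (Finset.mem_univ i0)]
      simp only [Function.update_self, ρ, add_zero]
      rw [← add_assoc, ← add_sub_assoc]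
      congr 3
      refine Finset.sum_congr rfl fun t ht => ?_
      rw [Function.update_of_ne (Finset.ne_of_mem_erase ht)]
    · simp
  let l : Cell d q → ℂ := fun n => ∑ t ∈ Finset.univ.erase i0, ρ n t * a t
  have hsum : ∀ v : Fin d → ℂ, ∑ j, (if j = i0 then 0 else v j) * a j =
      ∑ t ∈ Finset.univ.erase i0, v t * a t := by
    intro v
    rw [← Finset.add_sum_erase Finset.univ _ (Finset.mem_univ i0), if_pos rfl, zero_mul, zero_add]
    refine Finset.sum_congr rfl fun t ht => ?_
    rw [if_neg (Finset.ne_of_mem_erase ht)]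
  have hfib := fiber_eq (fun n => ρ n i0) l (fun n => hρ n i0)
    (fun n => by
      have := hi (.inl n)
      simp only [u] at this
      rwa [hsum] at this)
    (fun n m hnm h => by
      have := hi (.inr (.inl ⟨(n, m), hnm⟩))
      simp only [u] at this
      rw [hsum] at this
      apply this
      rw [div_eq_div_iff (hρ n i0) (hρ m i0)] at h
      simp only [sub_mul, mul_assoc, Finset.sum_sub_distrib, ← Finset.mul_sum]
      simp only [l] at h
      linear_combination h)
    (fun n m hnm h => by
      have := hi (.inr (.inr ⟨(n, m), hnm⟩))
      simp only [u] at this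
      rw [hsum] at this
      apply this
      simp only [sub_mul, mul_assoc, Finset.sum_sub_distrib, ← Finset.mul_sum]
      simp only [l] at h
      linear_combination h)
    (B V) (B Y) (by
      refine tendsto_pi_nhds.2 fun n => tendsto_pi_nhds.2 fun m => ?_
      simp only [Matrix.smul_apply, smul_eq_mul, B, Matrix.of_apply, Matrix.diagonal_apply]
      split_ifs with hnm
      · simp only [sub_add]
        simp only [sub_eq_add_neg]
        exact path_sum _ (ρ n) a 0 (hρ n) _
      · simp only [zero_add]
        simpa using tendsto_ofReal_inv.mul_const _)
    (fun s hs w hw h => by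
      rw [← hB] at h ⊢
      apply hF _ _ h
      intro j
      have hsC : (s : ℂ) ≠ 0 := by exact_mod_cast hs.ne'
      by_cases hj : j = i0
      · subst hj; simpa using hw
      · rw [Function.update_of_ne hj]; exact mul_ne_zero hsC (ha j))
  filter_upwards [hfib, eventually_gt_atTop (0 : ℝ)] with s hs hs0
  have hsC : (s : ℂ) ≠ 0 := by exact_mod_cast hs0.ne'
  have := hs ((s : ℂ) * a i0) (mul_ne_zero hsC (ha i0))
  rw [← hB, ← hB] at this
  have h3 : Function.update (fun j => (s : ℂ) * a j) i0 ((s : ℂ) * a i0) = fun j => (s : ℂ) * a j :=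
    Function.update_eq_self i0 (fun j => (s : ℂ) * a j)
  rwa [h3] at this

end Step1

end Part6

section Part7

section Step2
open Filter Topology

/-- The limit matrix along the path `s a + b`. -/
def limMat (d : ℕ) (q : Fin d → ℕ) (V : (Fin d → ℤ) → ℝ) (lam : ℂ) (a b : Fin d → ℂ) :
    Matrix (Cell d q) (Cell d q) ℂ := Matrix.of fun n m =>
  (if n = m then ∑ t, (ee (q t) (n t : ℕ) * b t +
    (if a t = 0 then (ee (q t) (n t : ℕ) * b t)⁻¹ else 0)) - lam else 0)
    + dft d q V (fun j => ((n j : ℕ) : ℤ) - ((m j : ℕ) : ℤ))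

lemma pathC {d : ℕ} (q : Fin d → ℕ) (V Y : (Fin d → ℤ) → ℝ) (lam : ℂ)
    (hEq : ∀ z : Fin d → ℂ, (∀ j, z j ≠ 0) → floquetDet d q V z lam = floquetDet d q Y z lam)
    (a b : Fin d → ℂ) (hab : ∀ t, a t ≠ 0 ∨ b t ≠ 0)
    {N : Type*} [Fintype N] [DecidableEq N] (φ : N → Cell d q) (hφ : Function.Injective φ)
    (hT : ∀ n : Cell d q, ∑ t, ee (q t) (n t : ℕ) * a t = 0 ↔ ∃ x, φ x = n) :
    ((limMat d q V lam a b).submatrix φ φ).det = ((limMat d q Y lam a b).submatrix φ φ).det := by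
  classical
  let T : Cell d q → Prop := fun n => ∑ t, ee (q t) (n t : ℕ) * a t = 0
  let M : ((Fin d → ℤ) → ℝ) → ℝ → Matrix (Cell d q) (Cell d q) ℂ := fun V s =>
    floquetMatrix d q V (fun t => (s : ℂ) * a t + b t) -
      lam • (1 : Matrix (Cell d q) (Cell d q) ℂ)
  have h1 : ∀ (V : (Fin d → ℤ) → ℝ) (n m : Cell d q), T n → Tendsto (fun s => M V s n m) atTop
      (𝓝 (limMat d q V lam a b n m)) := by
    intro V n m hn
    simp only [M, floquet_entry, limMat, Matrix.of_apply]
    split_ifs with hnm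
    · have h : ∀ s : ℝ, ∑ j, (ee (q j) (n j : ℕ) * ((s : ℂ) * a j + b j) +
          (ee (q j) (n j : ℕ) * ((s : ℂ) * a j + b j))⁻¹) =
          ∑ j, (ee (q j) (n j : ℕ) * b j + (ee (q j) (n j : ℕ) * ((s : ℂ) * a j + b j))⁻¹) := by
        intro s
        have h2 : (s : ℂ) * ∑ t, ee (q t) (n t : ℕ) * a t = 0 := by rw [hn, mul_zero]
        rw [← sub_eq_zero, ← Finset.sum_sub_distrib, ← h2, Finset.mul_sum]
        refine Finset.sum_congr rfl fun j _ => ?_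
        ring
      simp only [h]
      refine Tendsto.add_const _ (Tendsto.sub_const (tendsto_finsetSum _ fun t _ => ?_) _)
      exact tendsto_const_nhds.add (path_inv _ _ _ (ee_ne_zero _ _))
    · exact tendsto_const_nhds
  have h2 : ∀ (V : (Fin d → ℤ) → ℝ) (n m : Cell d q), ¬ T n →
      Tendsto (fun s : ℝ => (s : ℂ)⁻¹ * M V s n m) atTop
      (𝓝 (if n = m then ∑ t, ee (q t) (n t : ℕ) * a t else 0)) := by
    intro V n m _
    simp only [M, floquet_entry]
    split_ifs with hnm
    · simp only [sub_add]
      simp only [sub_eq_add_neg]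
      exact path_sum _ (fun t => ee (q t) (n t : ℕ)) a b (fun t => ee_ne_zero _ _) _
    · simp only [zero_add]
      simpa using tendsto_ofReal_inv.mul_const _
  have hne : ∀ᶠ s : ℝ in atTop, ∀ t, (s : ℂ) * a t + b t ≠ 0 := by
    rw [eventually_all]
    intro t
    by_cases ht : a t = 0
    · refine Eventually.of_forall fun s => ?_
      rw [ht, mul_zero, zero_add]
      exact (hab t).resolve_left (not_not.2 ht)
    · filter_upwards [eventually_gt_atTop ‖b t / a t‖] with s hs h
      have h3 : (s : ℂ) = - (b t / a t) := by
        field_simp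
        linear_combination h
      have h4 : ‖(s : ℂ)‖ = ‖b t / a t‖ := by rw [h3, norm_neg]
      rw [Complex.norm_real] at h4
      have := Real.le_norm_self s
      linarith
  have h3 := block_limit T (M V) (M Y) (limMat d q V lam a b) (limMat d q Y lam a b)
    (fun n => ∑ t, ee (q t) (n t : ℕ) * a t) (fun n hn => hn) (h1 V) (h2 V) (h1 Y) (h2 Y)
    (hne.mono fun s hs => hEq _ hs)
  let ψ : N ≃ {n // T n} := Equiv.ofBijective (fun x => ⟨φ x, (hT _).2 ⟨x, rfl⟩⟩)
    ⟨fun x y h => hφ (congrArg Subtype.val h), fun n => by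
      obtain ⟨x, hx⟩ := (hT n.1).1 n.2
      exact ⟨x, Subtype.ext hx⟩⟩
  rw [← Matrix.det_submatrix_equiv_self ψ, ← Matrix.det_submatrix_equiv_self ψ] at h3
  exact h3

lemma sum_split {k d : ℕ} (e : Fin k → Fin d) (he : Function.Injective e) (f : Fin d → ℂ)
    (t1 : Fin d) (ht1 : ∀ i, e i ≠ t1) (hf : ∀ t, (∀ i, e i ≠ t) → t ≠ t1 → f t = 0) :
    ∑ t, f t = ∑ i, f (e i) + f t1 := by
  classical
  rw [← Finset.sum_subset (Finset.subset_univ (insert t1 (Finset.univ.map ⟨e, he⟩))),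
    Finset.sum_insert, Finset.sum_map, add_comm]
  · rfl
  · simpa using ht1
  · intro t _ ht
    simp only [Finset.mem_insert, Finset.mem_map, Finset.mem_univ, true_and,
      Function.Embedding.coeFn_mk, not_or, not_exists] at ht
    exact hf t ht.2 ht.1

lemma generic_dir {d : ℕ} (q : Fin d → ℕ) (hq : ∀ j, 0 < q j)
    (hco : ∀ i j : Fin d, i ≠ j → Nat.Coprime (q i) (q j)) {k : ℕ} (e : Fin k → Fin d)
    (t1 t2 : Fin d) (h12 : t1 ≠ t2) (ht1 : ∀ i, e i ≠ t1) (ht2 : ∀ i, e i ≠ t2) :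
    ∃ a : Fin d → ℂ, (∀ i, a (e i) = 0) ∧ ∑ t, a t = 0 ∧ (∀ t, (∀ i, e i ≠ t) → a t ≠ 0) ∧
      ∀ n : Cell d q, ∑ t, ee (q t) (n t : ℕ) * a t = 0 → ∀ t, (∀ i, e i ≠ t) → (n t : ℕ) = 0 := by
  classical
  let p : Submodule ℂ (Fin d → ℂ) :=
    { carrier := {a | (∀ i, a (e i) = 0) ∧ ∑ t, a t = 0}
      add_mem' := fun {x y} hx hy => ⟨fun i => by simp [hx.1 i, hy.1 i], by
        simp [Finset.sum_add_distrib, hx.2, hy.2]⟩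
      zero_mem' := by simp
      smul_mem' := fun c x hx => ⟨fun i => by simp [hx.1 i], by
        simp [← Finset.mul_sum, hx.2]⟩ }
  have htest : ∀ t t', (∀ i, e i ≠ t) → (∀ i, e i ≠ t') →
      (Pi.single t 1 - Pi.single t' 1 : Fin d → ℂ) ∈ p := by
    intro t t' ht ht'
    refine ⟨fun i => ?_, ?_⟩
    · simp [ht i, ht' i]
    · simp [Finset.sum_sub_distrib]
  let I := {t : Fin d // ∀ i, e i ≠ t} ⊕ {n : Cell d q // ∃ t, (∀ i, e i ≠ t) ∧ (n t : ℕ) ≠ 0}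
  let v : I → Fin d → ℂ := fun x => match x with
    | .inl t => Pi.single t.1 1
    | .inr n => fun t => ee (q t) (n.1 t : ℕ)
  let f : I → Module.Dual ℂ (Fin d → ℂ) := fun x => Fintype.linearCombination ℂ (v x)
  have hfv : ∀ x a, f x a = ∑ t, v x t * a t := by
    intro x a
    simp [f, Fintype.linearCombination_apply, mul_comm]
  obtain ⟨a, ha, hfa⟩ := Module.Dual.exists_forall_mem_ne_zero_of_forall_exists p f (by
    intro x
    by_contra hcon
    push Not at hcon
    have hcon' : ∀ t t', (∀ i, e i ≠ t) → (∀ i, e i ≠ t') → v x t = v x t' := by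
      intro t t' ht ht'
      have := hcon _ (htest t t' ht ht')
      rw [hfv] at this
      simpa [mul_sub, Finset.sum_sub_distrib, Pi.single_apply, sub_eq_zero] using this
    rcases x with t | ⟨n, t, ht, hnt⟩
    · rcases eq_or_ne t.1 t1 with h | h
      · have := hcon' t.1 t2 t.2 ht2
        simp [v, h, h12.symm] at this
      · have := hcon' t.1 t1 t.2 ht1
        simp [v, h.symm] at this
    · let n0 : Cell d q := fun j => ⟨0, hq j⟩
      have hc := nonprop hq hco n n0 (ee (q t1) (n t1 : ℕ)) t1 t2 h12 (by simp [n0]) (by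
        have := hcon' t2 t1 ht2 ht1
        simp only [v] at this
        simp [n0, this])
      have h3 := hcon' t t1 ht ht1
      simp only [v] at h3
      rw [hc] at h3
      apply hnt
      have h4 : n t = n0 t := ee_inj _ _ _ (by simp [n0, h3])
      rw [h4])
  refine ⟨a, ha.1, ha.2, fun t ht => ?_, fun n hn t ht => ?_⟩
  · intro h0
    refine hfa (.inl ⟨t, ht⟩) ((hfv (.inl ⟨t, ht⟩) a).trans ?_)
    simp [v, Pi.single_apply, h0]
  · by_contra hcon
    exact hfa (.inr ⟨n, t, ht, hcon⟩) ((hfv (.inr ⟨n, t, ht, hcon⟩) a).trans hn)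

/-- Step E. -/
lemma stepE {d : ℕ} (q : Fin d → ℕ) (hq : ∀ j, 0 < q j)
    (hco : ∀ i j : Fin d, i ≠ j → Nat.Coprime (q i) (q j))
    (V Y : (Fin d → ℤ) → ℝ) (lam : ℂ)
    (hEq : ∀ z : Fin d → ℂ, (∀ j, z j ≠ 0) → floquetDet d q V z lam = floquetDet d q Y z lam)
    {k : ℕ} (e : Fin k → Fin d) (he : Function.Injective e)
    (t1 t2 : Fin d) (h12 : t1 ≠ t2) (ht1 : ∀ i, e i ≠ t1) (ht2 : ∀ i, e i ≠ t2) :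
    FloquetIsospectral k (fun i => q (e i)) (avgPot q e V) (avgPot q e Y) := by
  intro z hz mu
  obtain ⟨a, ha0, hasum, hane, haT⟩ := generic_dir q hq hco e t1 t2 h12 ht1 ht2
  let n0 : Cell d q := fun j => ⟨0, hq j⟩
  let φ : Cell k (fun i => q (e i)) → Cell d q := fun m => ovc e m n0
  have hφ : Function.Injective φ := fun m m' h => funext fun i => by
    rw [← ovc_mem e he m n0 i, ← ovc_mem e he m' n0 i]
    exact congrFun h (e i)
  have hφ0 : ∀ m t, (∀ i, e i ≠ t) → φ m t = ⟨0, hq t⟩ := fun m t ht => ovc_not_mem e m n0 t ht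
  have hφe : ∀ m i, φ m (e i) = m i := fun m i => ovc_mem e he m n0 i
  let b : Fin d → ℂ := Function.extend e z (Pi.single t1 (lam - mu))
  have hbe : ∀ i, b (e i) = z i := fun i => he.extend_apply _ _ _
  have hb' : ∀ t, (∀ i, e i ≠ t) → b t = (Pi.single t1 (lam - mu) : Fin d → ℂ) t := fun t ht =>
    Function.extend_apply' _ _ _ (by push Not; exact ht)
  have hT : ∀ n : Cell d q, ∑ t, ee (q t) (n t : ℕ) * a t = 0 ↔ ∃ x, φ x = n := by
    intro n
    constructor
    · intro h
      refine ⟨fun i => n (e i), funext fun t => ?_⟩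
      by_cases ht : ∃ i, e i = t
      · obtain ⟨i, rfl⟩ := ht
        exact hφe _ i
      · push Not at ht
        rw [hφ0 _ t ht]
        exact Fin.ext (haT n h t ht).symm
    · rintro ⟨x, rfl⟩
      rw [← hasum]
      refine Finset.sum_congr rfl fun t _ => ?_
      by_cases ht : ∃ i, e i = t
      · obtain ⟨i, rfl⟩ := ht
        rw [ha0, mul_zero]
      · push Not at ht
        rw [hφ0 _ t ht]
        simp
  have key := pathC q V Y lam hEq a b (fun t => by
    by_cases ht : ∃ i, e i = t
    · obtain ⟨i, rfl⟩ := ht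
      right; rw [hbe]; exact hz i
    · push Not at ht
      exact Or.inl (hane t ht)) φ hφ hT
  have hmat : ∀ V : (Fin d → ℤ) → ℝ, (limMat d q V lam a b).submatrix φ φ =
      floquetMatrix k (fun i => q (e i)) (avgPot q e V) z -
        mu • (1 : Matrix (Cell k fun i => q (e i)) (Cell k fun i => q (e i)) ℂ) := by
    intro V
    ext m m'
    rw [floquet_entry, dft_avg q hq e he]
    simp only [limMat, Matrix.submatrix_apply, Matrix.of_apply, hφ.eq_iff]
    congr 1
    · split_ifs with h
      · rw [sum_split e he _ t1 ht1]
        · simp only [hbe, ha0, if_true, hφe, hb' t1 ht1, hφ0 m t1 ht1, Pi.single_eq_same,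
            if_neg (hane t1 ht1)]
          simp
          ring
        · intro t ht htt
          rw [hb' t ht, if_neg (hane t ht), Pi.single_eq_of_ne htt]
          simp
      · rfl
    · congr 1
      funext t
      by_cases ht : ∃ i, e i = t
      · obtain ⟨i, rfl⟩ := ht
        rw [he.extend_apply, hφe, hφe]
      · rw [Function.extend_apply' _ _ _ ht]
        push Not at ht
        rw [hφ0 _ t ht, hφ0 _ t ht]
        simp
  rw [hmat, hmat] at key
  exact key

end Step2

end Part7

section Part8

section Step3
open Filter Topology

lemma three_units (α β x y z : ℂ) (hx : ‖x‖ = 1) (hy : ‖y‖ = 1) (hz : ‖z‖ = 1)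
    (hxy : x ≠ y) (hxz : x ≠ z) (hyz : y ≠ z) (h1 : ‖α + β * x‖ = 1) (h2 : ‖α + β * y‖ = 1)
    (h3 : ‖α + β * z‖ = 1) : α = 0 ∨ β = 0 := by
  let γ := (starRingEnd ℂ) α * β
  let κ := 1 - (starRingEnd ℂ) α * α - (starRingEnd ℂ) β * β
  have key : ∀ w : ℂ, ‖w‖ = 1 → ‖α + β * w‖ = 1 →
      γ * w ^ 2 - κ * w + (starRingEnd ℂ) γ = 0 := by
    intro w hw h
    have e1 : (starRingEnd ℂ) w * w = 1 := by
      rw [← Complex.normSq_eq_conj_mul_self, Complex.normSq_eq_norm_sq, hw]; simp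
    have e2 : (starRingEnd ℂ) (α + β * w) * (α + β * w) = 1 := by
      rw [← Complex.normSq_eq_conj_mul_self, Complex.normSq_eq_norm_sq, h]; simp
    simp only [map_add, map_mul] at e2
    simp only [γ, κ, map_mul, Complex.conj_conj]
    linear_combination w * e2 - (starRingEnd ℂ β * β * w + α * starRingEnd ℂ β) * e1
  have k1 := key x hx h1
  have k2 := key y hy h2
  have k3 := key z hz h3
  have m1 : γ * (x + y) - κ = 0 := by
    have : (x - y) * (γ * (x + y) - κ) = 0 := by linear_combination k1 - k2
    exact (mul_eq_zero.1 this).resolve_left (sub_ne_zero.2 hxy)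
  have m2 : γ * (x + z) - κ = 0 := by
    have : (x - z) * (γ * (x + z) - κ) = 0 := by linear_combination k1 - k3
    exact (mul_eq_zero.1 this).resolve_left (sub_ne_zero.2 hxz)
  have m3 : γ * (y - z) = 0 := by linear_combination m1 - m2
  have m4 : γ = 0 := (mul_eq_zero.1 m3).resolve_right (sub_ne_zero.2 hyz)
  rcases mul_eq_zero.1 m4 with h | h
  · left; simpa using h
  · right; exact h

lemma span_two {d : ℕ} (u v w : Fin d → ℂ)
    (h : ∀ a : Fin d → ℂ, ∑ t, u t * a t = 0 → ∑ t, v t * a t = 0 → ∑ t, w t * a t = 0) :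
    ∃ α β : ℂ, ∀ t, w t = α * u t + β * v t := by
  let F : (Fin d → ℂ) → Module.Dual ℂ (Fin d → ℂ) := fun w => Fintype.linearCombination ℂ w
  have hF : ∀ w a, F w a = ∑ t, w t * a t := by
    intro x a
    simp [F, Fintype.linearCombination_apply, mul_comm]
  have h1 : F w ∈ Submodule.span ℂ (Set.range ![F u, F v]) := by
    apply mem_span_of_iInf_ker_le_ker
    intro a ha
    simp only [Submodule.mem_iInf, LinearMap.mem_ker] at ha
    rw [LinearMap.mem_ker, hF]
    apply h
    · have := ha 0
      simpa [hF] using this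
    · have := ha 1
      simpa [hF] using this
  rw [Matrix.range_cons, Matrix.range_cons, Matrix.range_empty, Set.union_empty,
    Set.singleton_union, Submodule.mem_span_pair] at h1
  obtain ⟨α, β, hab⟩ := h1
  refine ⟨α, β, fun t => ?_⟩
  have := congrArg (fun f => f (Pi.single t 1)) hab
  simp only [LinearMap.add_apply, LinearMap.smul_apply, hF, smul_eq_mul] at this
  simpa [Pi.single_apply] using this.symm

lemma dft_zero_eq {d : ℕ} (hd : 3 ≤ d) (q : Fin d → ℕ) (hq : ∀ j, 0 < q j)
    (hco : ∀ i j : Fin d, i ≠ j → Nat.Coprime (q i) (q j))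
    (V Y : (Fin d → ℤ) → ℝ) (lam : ℂ)
    (hEq : ∀ z : Fin d → ℂ, (∀ j, z j ≠ 0) → floquetDet d q V z lam = floquetDet d q Y z lam) :
    dft d q V 0 = dft d q Y 0 := by
  let e : Fin 0 → Fin d := Fin.elim0
  have h := stepE q hq hco V Y lam hEq e (fun i => i.elim0) ⟨0, by omega⟩ ⟨1, by omega⟩
    (by simp) (fun i => i.elim0) (fun i => i.elim0) (fun i => i.elim0) (fun i => i.elim0) 0
  have h2 : ∀ V : (Fin d → ℤ) → ℝ,
      floquetDet 0 (fun i => q (e i)) (avgPot q e V) (fun i => i.elim0) 0 = dft d q V 0 := by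
    intro V
    rw [floquetDet, Matrix.det_unique, floquet_entry, dft_avg q hq e (fun i => i.elim0)]
    simp
    congr 1
    funext j
    rw [Function.extend_apply' _ _ _ (by rintro ⟨i, _⟩; exact i.elim0)]
  rw [h2, h2] at h
  exact h

lemma generic_two {d : ℕ} (hd : 3 ≤ d) (q : Fin d → ℕ) (hq : ∀ j, 0 < q j)
    (hco : ∀ i j : Fin d, i ≠ j → Nat.Coprime (q i) (q j)) (n n' : Cell d q)
    (i j : Fin d) (hij : i ≠ j) (hi : n i ≠ n' i) (hj : n j ≠ n' j) :
    ∃ a : Fin d → ℂ, (∀ t, a t ≠ 0) ∧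
      ∀ m : Cell d q, ∑ t, ee (q t) (m t : ℕ) * a t = 0 ↔ (m = n ∨ m = n') := by
  classical
  let ρ : Cell d q → Fin d → ℂ := fun n t => ee (q t) (n t : ℕ)
  have hρ : ∀ n t, ρ n t ≠ 0 := fun n t => ee_ne_zero _ _
  have hρinj : ∀ n m : Cell d q, (∀ t, ρ n t = ρ m t) → n = m := fun n m h =>
    funext fun t => ee_inj _ _ _ (h t)
  have hnp : ∀ (m m' : Cell d q) (c : ℂ) (s t : Fin d), s ≠ t → ρ m s = c * ρ m' s →
      ρ m t = c * ρ m' t → c = 1 := fun m m' c s t hst h1 h2 => nonprop hq hco m m' c s t hst h1 h2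
  let p : Submodule ℂ (Fin d → ℂ) :=
    { carrier := {a | ∑ t, ρ n t * a t = 0 ∧ ∑ t, ρ n' t * a t = 0}
      add_mem' := fun {x y} hx hy => ⟨by simp [mul_add, Finset.sum_add_distrib, hx.1, hy.1], by
        simp [mul_add, Finset.sum_add_distrib, hx.2, hy.2]⟩
      zero_mem' := by simp
      smul_mem' := fun c x hx => ⟨by
        simp only [Pi.smul_apply, smul_eq_mul, mul_left_comm _ c, ← Finset.mul_sum, hx.1, mul_zero],
        by simp only [Pi.smul_apply, smul_eq_mul, mul_left_comm _ c, ← Finset.mul_sum, hx.2,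
          mul_zero]⟩ }
  let I := Fin d ⊕ {m : Cell d q // m ≠ n ∧ m ≠ n'}
  let v : I → Fin d → ℂ := fun x => match x with
    | .inl t => Pi.single t 1
    | .inr m => ρ m.1
  let f : I → Module.Dual ℂ (Fin d → ℂ) := fun x => Fintype.linearCombination ℂ (v x)
  have hfv : ∀ x a, f x a = ∑ t, v x t * a t := by
    intro x a
    simp [f, Fintype.linearCombination_apply, mul_comm]
  obtain ⟨k, hki, hkj⟩ : ∃ k : Fin d, k ≠ i ∧ k ≠ j := by
    have : ({i, j} : Finset (Fin d)).card < (Finset.univ : Finset (Fin d)).card := by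
      have := Finset.card_le_two (a := i) (b := j)
      simp only [Finset.card_univ, Fintype.card_fin]
      omega
    obtain ⟨k, _, hk⟩ := Finset.exists_mem_notMem_of_card_lt_card this
    simp only [Finset.mem_insert, Finset.mem_singleton, not_or] at hk
    exact ⟨k, hk⟩
  obtain ⟨a, ha, hfa⟩ := Module.Dual.exists_forall_mem_ne_zero_of_forall_exists p f (by
    intro x
    by_contra hcon
    push Not at hcon
    obtain ⟨α, β, hab⟩ := span_two (ρ n) (ρ n') (v x) (fun a h1 h2 => by
      rw [← hfv]; exact hcon a ⟨h1, h2⟩)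
    rcases x with t | ⟨m, hmn, hmn'⟩
    · have hne : ∀ s, s ≠ t → α * ρ n s + β * ρ n' s = 0 := by
        intro s hs
        rw [← hab s]
        simp [v, hs]
      -- two coordinates other than t, one of them among i and j
      obtain ⟨s1, s2, hs12, hs1, hs2, hdiff⟩ : ∃ s1 s2 : Fin d, s1 ≠ s2 ∧ s1 ≠ t ∧ s2 ≠ t ∧
          n s1 ≠ n' s1 := by
        by_cases hit : i = t
        · exact ⟨j, k, hkj.symm, by rw [← hit]; exact hij.symm, by rw [← hit]; exact hki, hj⟩
        · by_cases hjt : j = t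
          · exact ⟨i, k, hki.symm, hit, by rw [← hjt]; exact hkj, hi⟩
          · exact ⟨i, j, hij, hit, hjt, hi⟩
      by_cases hα : α = 0
      · have h1 := hne s1 hs1
        rw [hα, zero_mul, zero_add] at h1
        have hβ : β = 0 := (mul_eq_zero.1 h1).resolve_right (hρ _ _)
        have h2 := hab t
        simp [v, hα, hβ] at h2
      · have h1 : ∀ s, s ≠ t → ρ n s = (-β / α) * ρ n' s := by
          intro s hs
          have := hne s hs
          field_simp
          linear_combination this
        have hc := hnp n n' _ s1 s2 hs12 (h1 s1 hs1) (h1 s2 hs2)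
        apply hdiff
        apply ee_inj
        have := h1 s1 hs1
        rw [hc, one_mul] at this
        exact this
    · have hm : ∀ t, ρ m t = α * ρ n t + β * ρ n' t := hab
      have hnorm : ∀ (m : Cell d q) t, ‖ρ m t‖ = 1 := fun m t => ee_norm _ _
      have hξ : ∀ t, ‖ρ n' t / ρ n t‖ = 1 := fun t => by rw [norm_div, hnorm, hnorm, div_one]
      have hξ1 : ∀ t, ‖α + β * (ρ n' t / ρ n t)‖ = 1 := by
        intro t
        have : α + β * (ρ n' t / ρ n t) = ρ m t / ρ n t := by
          rw [hm]
          have := hρ n t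
          field_simp
        rw [this, norm_div, hnorm, hnorm, div_one]
      have hdist : ∀ s t, s ≠ t → n s ≠ n' s → ρ n' s / ρ n s ≠ ρ n' t / ρ n t := by
        intro s t hst hs heq
        have hc := hnp n' n (ρ n' s / ρ n s) s t hst (by rw [div_mul_cancel₀ _ (hρ n s)])
          (by rw [heq, div_mul_cancel₀ _ (hρ n t)])
        apply hs
        apply ee_inj
        exact ((div_eq_one_iff_eq (hρ n s)).1 hc).symm
      rcases three_units α β _ _ _ (hξ i) (hξ j) (hξ k) (hdist i j hij hi)
        (hdist i k hki.symm hi) (hdist j k hkj.symm hj) (hξ1 i) (hξ1 j) (hξ1 k) with h | h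
      · have h1 : ∀ t, ρ m t = β * ρ n' t := fun t => by rw [hm, h, zero_mul, zero_add]
        have hc := hnp m n' β i j hij (h1 i) (h1 j)
        exact hmn' (hρinj _ _ fun t => by rw [h1, hc, one_mul])
      · have h1 : ∀ t, ρ m t = α * ρ n t := fun t => by rw [hm, h, zero_mul, add_zero]
        have hc := hnp m n α i j hij (h1 i) (h1 j)
        exact hmn (hρinj _ _ fun t => by rw [h1, hc, one_mul]))
  refine ⟨a, fun t h0 => ?_, fun m => ⟨fun h => ?_, ?_⟩⟩
  · refine hfa (.inl t) ((hfv (.inl t) a).trans ?_)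
    simp [v, Pi.single_apply, h0]
  · by_contra hcon
    push Not at hcon
    exact hfa (.inr ⟨m, hcon⟩) ((hfv (.inr ⟨m, hcon⟩) a).trans h)
  · rintro (rfl | rfl)
    · exact ha.1
    · exact ha.2

lemma step2 {d : ℕ} (hd : 3 ≤ d) (q : Fin d → ℕ) (hq : ∀ j, 0 < q j)
    (hco : ∀ i j : Fin d, i ≠ j → Nat.Coprime (q i) (q j))
    (V Y : (Fin d → ℤ) → ℝ) (lam : ℂ)
    (hEq : ∀ z : Fin d → ℂ, (∀ j, z j ≠ 0) → floquetDet d q V z lam = floquetDet d q Y z lam)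
    (n n' : Cell d q) (i j : Fin d) (hij : i ≠ j) (hi : n i ≠ n' i) (hj : n j ≠ n' j)
    (hY : dft d q Y (fun j => ((n j : ℕ) : ℤ) - ((n' j : ℕ) : ℤ)) = 0) :
    dft d q V (fun j => ((n j : ℕ) : ℤ) - ((n' j : ℕ) : ℤ)) = 0 := by
  obtain ⟨a, ha, hT⟩ := generic_two hd q hq hco n n' i j hij hi hj
  have hnn : n ≠ n' := fun h => hi (by rw [h])
  let φ : Fin 2 → Cell d q := ![n, n']
  have hφ : Function.Injective φ := by
    intro x y h
    fin_cases x <;> fin_cases y <;> simp_all [φ]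
  have key := pathC q V Y lam hEq a 0 (fun t => Or.inl (ha t)) φ hφ (fun m => by
    rw [hT, Fin.exists_fin_two]
    simp [φ, eq_comm])
  have h0 := dft_zero_eq hd q hq hco V Y lam hEq
  have hneg : ∀ V : (Fin d → ℤ) → ℝ, dft d q V (fun j => ((n' j : ℕ) : ℤ) - ((n j : ℕ) : ℤ)) =
      (starRingEnd ℂ) (dft d q V (fun j => ((n j : ℕ) : ℤ) - ((n' j : ℕ) : ℤ))) := by
    intro V
    rw [← dft_neg]
    congr 1
    funext j
    simp
  have hz : ∀ m : Cell d q, (fun j => ((m j : ℕ) : ℤ) - ((m j : ℕ) : ℤ)) = 0 := fun m => by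
    funext j; simp
  rw [Matrix.det_fin_two, Matrix.det_fin_two] at key
  simp only [φ, limMat, Matrix.submatrix_apply, Matrix.of_apply, Matrix.cons_val_zero,
    Matrix.cons_val_one, if_neg hnn, if_neg hnn.symm, if_true, hz, hneg, h0, hY, ha,
    zero_add, if_false, Pi.zero_apply, mul_zero, map_zero] at key
  have h3 : dft d q V (fun j => ((n j : ℕ) : ℤ) - ((n' j : ℕ) : ℤ)) *
      (starRingEnd ℂ) (dft d q V (fun j => ((n j : ℕ) : ℤ) - ((n' j : ℕ) : ℤ))) = 0 := by
    linear_combination -key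
  rcases mul_eq_zero.1 h3 with h | h
  · exact h
  · simpa using h

end Step3

end Part8

section Part9

section Blocks

lemma blockEmbed_val {r d : ℕ} (D : Fin r → ℕ) (hsum : ∑ j, D j = d) (j : Fin r) (i : Fin (D j)) :
    (blockEmbed D hsum j i : ℕ) = (∑ k ∈ Finset.univ.filter (fun k => k < j), D k) + i.1 := rfl

lemma block_offset_le {r : ℕ} (D : Fin r → ℕ) (j j' : Fin r) (h : j < j') :
    (∑ k ∈ Finset.univ.filter (fun k => k < j), D k) + D j ≤
      ∑ k ∈ Finset.univ.filter (fun k => k < j'), D k := by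
  have hj : j ∉ Finset.univ.filter (fun k => k < j) := by simp
  calc (∑ k ∈ Finset.univ.filter (fun k => k < j), D k) + D j
      = ∑ k ∈ insert j (Finset.univ.filter (fun k => k < j)), D k := by
        rw [Finset.sum_insert hj, add_comm]
    _ ≤ _ := by
        apply Finset.sum_le_sum_of_subset
        intro x hx
        simp only [Finset.mem_insert, Finset.mem_filter, Finset.mem_univ, true_and] at hx ⊢
        rcases hx with rfl | hx
        · exact h
        · exact hx.trans h

lemma block_disj {r d : ℕ} (D : Fin r → ℕ) (hsum : ∑ j, D j = d) (j j' : Fin r) (i : Fin (D j))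
    (i' : Fin (D j')) (h : blockEmbed D hsum j i = blockEmbed D hsum j' i') : j = j' := by
  have h1 := congrArg Fin.val h
  rw [blockEmbed_val, blockEmbed_val] at h1
  have := i.2
  have := i'.2
  rcases lt_trichotomy j j' with hlt | heq | hlt
  · have := block_offset_le D j j' hlt
    omega
  · exact heq
  · have := block_offset_le D j' j hlt
    omega

lemma block_inj {r d : ℕ} (D : Fin r → ℕ) (hsum : ∑ j, D j = d) (j : Fin r) :
    Function.Injective (blockEmbed D hsum j) := by
  intro i i' h
  have h1 := congrArg Fin.val h
  rw [blockEmbed_val, blockEmbed_val] at h1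
  exact Fin.ext (by omega)

lemma block_surj {r d : ℕ} (D : Fin r → ℕ) (hsum : ∑ j, D j = d) (t : Fin d) :
    ∃ j i, blockEmbed D hsum j i = t := by
  let F : (Σ j : Fin r, Fin (D j)) → Fin d := fun x => blockEmbed D hsum x.1 x.2
  have hinj : Function.Injective F := by
    rintro ⟨j, i⟩ ⟨j', i'⟩ h
    have hj := block_disj D hsum j j' i i' h
    subst hj
    have hii : i = i' := block_inj D hsum j h
    rw [hii]
  have hbij : Function.Bijective F := (Fintype.bijective_iff_injective_and_card F).2 ⟨hinj, by
    simp [hsum]⟩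
  obtain ⟨⟨j, i⟩, h⟩ := hbij.2 t
  exact ⟨j, i, h⟩

/-- Mixed Fourier coefficients of `V` vanish. -/
def MixedZero {r d : ℕ} (q : Fin d → ℕ) (D : Fin r → ℕ) (hsum : ∑ j, D j = d)
    (V : (Fin d → ℤ) → ℝ) : Prop :=
  ∀ (n n' : Cell d q) (j j' : Fin r) (i : Fin (D j)) (i' : Fin (D j')), j ≠ j' →
    n (blockEmbed D hsum j i) ≠ n' (blockEmbed D hsum j i) →
    n (blockEmbed D hsum j' i') ≠ n' (blockEmbed D hsum j' i') →
    dft d q V (fun t => ((n t : ℕ) : ℤ) - ((n' t : ℕ) : ℤ)) = 0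

lemma mixedZero_sep {r d : ℕ} (q : Fin d → ℕ) (hq : ∀ j, 0 < q j) (D : Fin r → ℕ)
    (hsum : ∑ j, D j = d) (Y : (Fin d → ℤ) → ℝ) (Yj : (j : Fin r) → (Fin (D j) → ℤ) → ℝ)
    (hYsep : ∀ n : Fin d → ℤ, Y n = ∑ j, Yj j (fun i => n (blockEmbed D hsum j i))) :
    MixedZero q D hsum Y := by
  intro n n' j j' i i' hjj hi hi'
  have hY : Y = fun n => ∑ j, Yj j (fun i => n (blockEmbed D hsum j i)) := funext hYsep
  have h1 := dft_sum d q (fun j n => Yj j (fun i => n (blockEmbed D hsum j i)))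
    (fun t => ((n t : ℕ) : ℤ) - ((n' t : ℕ) : ℤ))
  rw [hY, h1]
  refine Finset.sum_eq_zero fun b _ => ?_
  have hv : ∀ (c : Fin r) (x : Fin (D c)), b ≠ c →
      n (blockEmbed D hsum c x) ≠ n' (blockEmbed D hsum c x) →
      dft d q (fun n => Yj b (fun i => n (blockEmbed D hsum b i)))
        (fun t => ((n t : ℕ) : ℤ) - ((n' t : ℕ) : ℤ)) = 0 := by
    intro c x hbc hx
    refine dft_vanish d q hq _ _ (blockEmbed D hsum c x) (fun m y => ?_) fun h =>
      hx (cell_eq_of_dvd n n' _ h)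
    congr 1
    funext s
    rw [Function.update_of_ne]
    intro h
    exact hbc (block_disj D hsum b c s x h)
  by_cases hb : b = j
  · exact hv j' i' (by rw [hb]; exact hjj) hi'
  · exact hv j i hb hi

lemma fourier_avg {d k : ℕ} (q : Fin d → ℕ) (hq : ∀ j, 0 < q j) (e : Fin k → Fin d)
    (he : Function.Injective e) (V : (Fin d → ℤ) → ℝ) (hV : IsPeriodicPotential d q V)
    (x : Fin d → ℤ) [DecidablePred fun l : Cell d q => ∀ t, (∀ i, e i ≠ t) → (l t : ℕ) = 0] :
    ((avgPot q e V (fun i => x (e i)) : ℝ) : ℂ) =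
      ∑ l : Cell d q, if ∀ t, (∀ i, e i ≠ t) → (l t : ℕ) = 0 then
        dft d q V (fun j => ((l j : ℕ) : ℤ)) * ∏ j, ee (q j) ((l j : ℕ) * x j) else 0 := by
  rw [fourier_inversion k (fun i => q (e i)) (fun i => hq _) _ (avgPot_periodic q e he V hV)]
  let n0 : Cell d q := fun j => ⟨0, hq j⟩
  rw [← Finset.sum_filter]
  refine Finset.sum_bij (fun m _ => ovc e m n0) ?_ ?_ ?_ ?_
  · intro m _
    simp only [Finset.mem_filter, Finset.mem_univ, true_and]
    intro t ht
    rw [ovc_not_mem e m n0 t ht]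
  · intro m _ m' _ h
    funext i
    rw [← ovc_mem e he m n0 i, ← ovc_mem e he m' n0 i]
    exact congrFun h (e i)
  · intro l hl
    simp only [Finset.mem_filter, Finset.mem_univ, true_and] at hl
    refine ⟨fun i => l (e i), Finset.mem_univ _, funext fun t => ?_⟩
    by_cases ht : ∃ i, e i = t
    · obtain ⟨i, rfl⟩ := ht
      exact ovc_mem e he _ _ i
    · push Not at ht
      rw [ovc_not_mem e _ n0 t ht]
      exact Fin.ext (hl t ht).symm
  · intro m _
    rw [dft_avg q hq e he]
    congr 1
    · congr 1
      funext t
      by_cases ht : ∃ i, e i = t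
      · obtain ⟨i, rfl⟩ := ht
        rw [he.extend_apply, ovc_mem e he]
      · rw [Function.extend_apply' _ _ _ ht]
        push Not at ht
        rw [ovc_not_mem e _ n0 t ht]
        simp [n0]
    · symm
      rw [← Finset.prod_subset (Finset.subset_univ (Finset.univ.map ⟨e, he⟩)), Finset.prod_map]
      · refine Finset.prod_congr rfl fun i _ => ?_
        simp [ovc_mem e he]
      · intro j _ hj
        have : ∀ i, e i ≠ j := by simpa using hj
        rw [ovc_not_mem e _ n0 j this]
        simp [n0]

lemma sep_of_mixedZero {r d : ℕ} (q : Fin d → ℕ) (hq : ∀ j, 0 < q j) (D : Fin r → ℕ)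
    (hsum : ∑ j, D j = d) (V : (Fin d → ℤ) → ℝ) (hV : IsPeriodicPotential d q V)
    (hm : MixedZero q D hsum V) (x : Fin d → ℤ) :
    ((V x : ℝ) : ℂ) = ∑ j, ((avgPot q (blockEmbed D hsum j) V
      (fun i => x (blockEmbed D hsum j i)) : ℝ) : ℂ) - (r - 1 : ℂ) * dft d q V 0 := by
  classical
  let n0 : Cell d q := fun j => ⟨0, hq j⟩
  simp only [fun j => fourier_avg q hq (blockEmbed D hsum j) (block_inj D hsum j) V hV x]
  rw [fourier_inversion d q hq V hV x, Finset.sum_comm]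
  have h1 : (r - 1 : ℂ) * dft d q V 0 = ∑ l : Cell d q, if l = n0 then
      (r - 1 : ℂ) * dft d q V 0 else 0 := by
    rw [Finset.sum_ite_eq' Finset.univ n0]
    simp
  rw [h1, ← Finset.sum_sub_distrib]
  refine Finset.sum_congr rfl fun l _ => ?_
  by_cases hl : l = n0
  · rw [if_pos hl]
    subst hl
    have : (fun j => (((n0 j : Fin (q j)) : ℕ) : ℤ)) = 0 := by funext j; simp [n0]
    rw [this]
    simp [n0]
    ring
  · rw [if_neg hl, sub_zero]
    have hex : ∃ t, l t ≠ n0 t := by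
      by_contra hcon
      push Not at hcon
      exact hl (funext hcon)
    obtain ⟨t, ht⟩ := hex
    obtain ⟨j, i, rfl⟩ := block_surj D hsum t
    by_cases hmix : ∃ j', j' ≠ j ∧ ∃ i', l (blockEmbed D hsum j' i') ≠ n0 (blockEmbed D hsum j' i')
    · obtain ⟨j', hj', i', hi'⟩ := hmix
      have h0 := hm l n0 j' j i' i hj' hi' ht
      have h2 : dft d q V (fun t => ((l t : ℕ) : ℤ)) = 0 := by
        rw [← h0]
        congr 1
      rw [h2]
      simp
    · push Not at hmix
      rw [Finset.sum_eq_single j]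
      · rw [if_pos]
        intro t ht'
        obtain ⟨b, s, rfl⟩ := block_surj D hsum t
        have hb : b ≠ j := by
          rintro rfl
          exact ht' s rfl
        rw [hmix b hb s]
      · intro b _ hb
        rw [if_neg]
        intro hcon
        apply ht
        exact Fin.ext (hcon (blockEmbed D hsum j i)
          (fun s hs => hb (block_disj D hsum b j s i hs)))
      · intro h
        exact absurd (Finset.mem_univ j) h

lemma avg_sep {r d : ℕ} (q : Fin d → ℕ) (hq : ∀ j, 0 < q j) (D : Fin r → ℕ)
    (hsum : ∑ j, D j = d) (Y : (Fin d → ℤ) → ℝ) (Yj : (j : Fin r) → (Fin (D j) → ℤ) → ℝ)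
    (hYsep : ∀ n : Fin d → ℤ, Y n = ∑ j, Yj j (fun i => n (blockEmbed D hsum j i))) (j : Fin r) :
    ∃ κ : ℝ, ∀ m, avgPot q (blockEmbed D hsum j) Y m = Yj j m + κ := by
  classical
  have hqR : (∏ j, (q j : ℝ)) ≠ 0 :=
    Finset.prod_ne_zero_iff.2 fun j _ => by exact_mod_cast (hq j).ne'
  refine ⟨(1 / ∏ j, (q j : ℝ)) * ∑ n : Cell d q, ∑ b ∈ Finset.univ.erase j,
    Yj b (fun i => ((n (blockEmbed D hsum b i) : ℕ) : ℤ)), fun m => ?_⟩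
  unfold avgPot
  have h1 : ∀ n : Cell d q, Y (Function.extend (blockEmbed D hsum j) m
      (fun t => ((n t : ℕ) : ℤ))) = Yj j m + ∑ b ∈ Finset.univ.erase j,
    Yj b (fun i => ((n (blockEmbed D hsum b i) : ℕ) : ℤ)) := by
    intro n
    rw [hYsep, ← Finset.add_sum_erase Finset.univ _ (Finset.mem_univ j)]
    congr 1
    · congr 1
      funext i
      rw [(block_inj D hsum j).extend_apply]
    · refine Finset.sum_congr rfl fun b hb => ?_
      congr 1
      funext i
      rw [Function.extend_apply']
      rintro ⟨s, hs⟩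
      exact Finset.ne_of_mem_erase hb (block_disj D hsum j b s i hs).symm
  simp only [h1, Finset.sum_add_distrib, Finset.sum_const, Finset.card_univ, Fintype.card_pi,
    Fintype.card_fin, nsmul_eq_mul]
  push_cast
  field_simp

end Blocks

end Part9

section Part10

section OneD
open Polynomial

lemma fin_succ_dvd (q : ℕ) [NeZero q] (x : Fin q) :
    (q : ℤ) ∣ (((x + 1 : Fin q) : ℕ) : ℤ) - ((x : ℕ) + 1 : ℤ) := by
  have h : ((x + 1 : Fin q) : ℕ) = ((x : ℕ) + 1) % q := by
    rw [Fin.val_add, Fin.val_one', Nat.add_mod_mod]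
  rw [h]
  push_cast
  have := Int.dvd_self_sub_emod (x := ((x : ℕ) : ℤ) + 1) (m := (q : ℤ))
  rw [← neg_sub]
  exact (dvd_neg).2 this

lemma oneD_shift (qq : Fin 1 → ℕ) (hqq : ∀ j, 0 < qq j) (U : (Fin 1 → ℤ) → ℝ) (w lam : ℂ) :
    floquetDet 1 qq U (fun _ => ee (qq 0) 1 * w) lam = floquetDet 1 qq U (fun _ => w) lam := by
  have hne : ∀ j, NeZero (qq j) := fun j => ⟨(hqq j).ne'⟩
  let σ : Cell 1 qq → Cell 1 qq := fun n j => n j + 1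
  have hσ : Function.Bijective σ := by
    rw [← Finite.injective_iff_bijective]
    intro n m h
    funext j
    have := congrFun h j
    simpa [σ] using this
  let s := Equiv.ofBijective σ hσ
  unfold floquetDet
  conv_rhs => rw [← Matrix.det_submatrix_equiv_self s]
  congr 1
  ext n m
  rw [Matrix.submatrix_apply, floquet_entry, floquet_entry]
  simp only [s.injective.eq_iff]
  congr 1
  · split_ifs
    · congr 1
      refine Finset.sum_congr rfl fun j _ => ?_
      have h1 : ee (qq j) ((s n j : Fin (qq j)) : ℕ) = ee (qq j) (n j : ℕ) * ee (qq j) 1 := by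
        rw [← ee_add]
        exact ee_periodic _ (hqq j) _ _ (fin_succ_dvd (qq j) (n j))
      have hj : j = 0 := Subsingleton.elim _ _
      subst hj
      rw [h1, mul_assoc]
    · rfl
  · apply dft_periodic 1 qq hqq
    intro j
    have h1 := fin_succ_dvd (qq j) (n j)
    have h2 := fin_succ_dvd (qq j) (m j)
    have h3 := (Int.dvd_sub h2 h1)
    have h4 : (((n j : ℕ) : ℤ) - ((m j : ℕ) : ℤ)) -
      ((((n j + 1 : Fin (qq j)) : ℕ) : ℤ) - (((m j + 1 : Fin (qq j)) : ℕ) : ℤ)) =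
      ((((m j + 1 : Fin (qq j)) : ℕ) : ℤ) - ((m j : ℕ) + 1 : ℤ)) -
      ((((n j + 1 : Fin (qq j)) : ℕ) : ℤ) - ((n j : ℕ) + 1 : ℤ)) := by ring
    rw [← h4] at h3
    exact h3

lemma oneD_poly (qq : Fin 1 → ℕ) (U : (Fin 1 → ℤ) → ℝ) (lam : ℂ) :
    ∃ B : Matrix (Cell 1 qq) (Cell 1 qq) ℂ, ∀ w : ℂ, w ≠ 0 →
      (quadPoly (fun n : Cell 1 qq => ee (qq 0) (n 0 : ℕ))
        (fun n => (ee (qq 0) (n 0 : ℕ))⁻¹) B).eval w =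
      w ^ (qq 0) * floquetDet 1 qq U (fun _ => w) lam := by
  refine ⟨Matrix.of fun n m => (if n = m then -lam else 0) +
    dft 1 qq U (fun j => ((n j : ℕ) : ℤ) - ((m j : ℕ) : ℤ)), fun w hw => ?_⟩
  rw [quadPoly_eval' _ _ w hw]
  have hcard : Fintype.card (Cell 1 qq) = qq 0 := by simp
  rw [hcard]
  congr 1
  unfold floquetDet
  congr 1
  ext n m
  rw [floquet_entry]
  simp only [Matrix.add_apply, Matrix.diagonal_apply, Matrix.of_apply, Fin.sum_univ_one]
  split_ifs <;> ring

lemma oneD_const (qq : Fin 1 → ℕ) (hqq : ∀ j, 0 < qq j) (U U' : (Fin 1 → ℤ) → ℝ) (lam lam' : ℂ) :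
    ∃ b : ℂ, ∀ w : ℂ, w ≠ 0 → floquetDet 1 qq U (fun _ => w) lam =
      floquetDet 1 qq U' (fun _ => w) lam' + b := by
  obtain ⟨B, hB⟩ := oneD_poly qq U lam
  obtain ⟨B', hB'⟩ := oneD_poly qq U' lam'
  set Q := qq 0 with hQ
  have hQ0 : 0 < Q := hqq 0
  set c : Cell 1 qq → ℂ := fun n => ee Q (n 0 : ℕ)
  set p := quadPoly c (fun n => (c n)⁻¹) B
  set p' := quadPoly c (fun n => (c n)⁻¹) B'
  set r := p - p' with hr
  set ζ := ee Q 1 with hζ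
  have hcard : Fintype.card (Cell 1 qq) = Q := by simp [hQ]
  have hζ0 : ζ ≠ 0 := ee_ne_zero _ _
  have hζQ : ζ ^ Q = 1 := ee_pow Q hQ0 1
  have hcomp : r.comp (C ζ * X) = r := by
    apply Polynomial.funext
    intro w
    rw [eval_comp, eval_mul, eval_C, eval_X]
    by_cases hw : w = 0
    · rw [hw, mul_zero]
    · rw [hr, eval_sub, eval_sub]
      rw [hB _ (mul_ne_zero hζ0 hw), hB' _ (mul_ne_zero hζ0 hw), hB _ hw, hB' _ hw,
        oneD_shift qq hqq, oneD_shift qq hqq, mul_pow, hζQ, one_mul]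
  have hcoef : ∀ j, j ≠ Q → r.coeff j = 0 := by
    intro j hj
    by_cases hdvd : Q ∣ j
    · obtain ⟨x, rfl⟩ := hdvd
      rcases Nat.lt_or_ge 2 x with hx | hx
      · apply coeff_eq_zero_of_natDegree_lt
        have h1 : r.natDegree ≤ Q * 2 := by
          refine (natDegree_sub_le _ _).trans (max_le ?_ ?_)
          · rw [← hcard]; exact quadPoly_natDegree _ _ _
          · rw [← hcard]; exact quadPoly_natDegree _ _ _
        exact h1.trans_lt (Nat.mul_lt_mul_of_pos_left hx hQ0)
      · interval_cases x
        · rw [mul_zero, coeff_zero_eq_eval_zero, hr, eval_sub, quadPoly_eval_zero,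
            quadPoly_eval_zero, sub_self]
        · simp at hj
        · have h1 := quadPoly_coeff c (fun n => (c n)⁻¹) B
          have h2 := quadPoly_coeff c (fun n => (c n)⁻¹) B'
          rw [hcard] at h1 h2
          rw [hr, coeff_sub, h1, h2, sub_self]
    · have h1 := congrArg (fun s => s.coeff j) hcomp
      simp only [comp_C_mul_X_coeff] at h1
      have h2 : ζ ^ j ≠ 1 := by
        rw [hζ, ← ee_natmul, mul_one, ne_eq, ee_eq_one_iff Q hQ0]
        exact_mod_cast hdvd
      have h3 : r.coeff j * (ζ ^ j - 1) = 0 := by linear_combination h1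
      exact (mul_eq_zero.1 h3).resolve_right (sub_ne_zero.2 h2)
  have hmono : r = C (r.coeff Q) * X ^ Q := by
    ext j
    rw [coeff_C_mul, coeff_X_pow]
    split_ifs with h
    · rw [h, mul_one]
    · rw [hcoef j h, mul_zero]
  refine ⟨r.coeff Q, fun w hw => ?_⟩
  have h1 : r.eval w = r.coeff Q * w ^ Q := by
    conv_lhs => rw [hmono]
    simp
  rw [hr, eval_sub, hB w hw, hB' w hw] at h1
  have hwQ : w ^ Q ≠ 0 := pow_ne_zero _ hw
  apply mul_left_cancel₀ hwQ
  rw [← hr] at h1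
  linear_combination h1

lemma oneD_surj (qq : Fin 1 → ℕ) (hqq : ∀ j, 0 < qq j) (U : (Fin 1 → ℤ) → ℝ) (lam E : ℂ) :
    ∃ w : ℂ, w ≠ 0 ∧ floquetDet 1 qq U (fun _ => w) lam = E := by
  obtain ⟨B, hB⟩ := oneD_poly qq U lam
  set Q := qq 0 with hQ
  have hQ0 : 0 < Q := hqq 0
  set c : Cell 1 qq → ℂ := fun n => ee Q (n 0 : ℕ) with hc
  have hcard : Fintype.card (Cell 1 qq) = Q := by simp [hQ]
  set p := quadPoly c (fun n => (c n)⁻¹) B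
  set g := p - C E * X ^ Q with hg
  have hcoef : g.coeff (Q * 2) ≠ 0 := by
    have h1 := quadPoly_coeff c (fun n => (c n)⁻¹) B
    rw [hcard] at h1
    rw [hg, coeff_sub, h1, coeff_C_mul, coeff_X_pow, if_neg (by omega), mul_zero, sub_zero]
    exact Finset.prod_ne_zero_iff.2 fun n _ => ee_ne_zero _ _
  have hdeg : g.degree ≠ 0 := by
    have := le_degree_of_ne_zero hcoef
    intro h
    rw [h] at this
    have : Q * 2 ≤ 0 := by exact_mod_cast this
    omega
  obtain ⟨w, hw⟩ := IsAlgClosed.exists_root g hdeg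
  have hw0 : w ≠ 0 := by
    rintro rfl
    rw [IsRoot, hg, eval_sub, quadPoly_eval_zero] at hw
    simp only [eval_mul, eval_C, eval_pow, eval_X, zero_pow hQ0.ne', mul_zero, sub_zero] at hw
    exact Finset.prod_ne_zero_iff.2 (fun n _ => inv_ne_zero (ee_ne_zero _ _)) hw
  refine ⟨w, hw0, ?_⟩
  rw [IsRoot, hg, eval_sub, hB w hw0] at hw
  simp only [eval_mul, eval_C, eval_pow, eval_X] at hw
  apply mul_left_cancel₀ (pow_ne_zero Q hw0)
  linear_combination hw

/-- Structure of one-dimensional Floquet determinants. -/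
lemma oneD (qq : Fin 1 → ℕ) (hqq : ∀ j, 0 < qq j) (U : (Fin 1 → ℤ) → ℝ) :
    ∃ (A : ℂ → ℂ) (f : ℂ[X]), f.Monic ∧ f.natDegree = qq 0 ∧ (∀ E, ∃ w, w ≠ 0 ∧ A w = E) ∧
      ∀ w, w ≠ 0 → ∀ x, floquetDet 1 qq U (fun _ => w) (-x) = A w + f.eval x := by
  set K : ℂ := floquetDet 1 qq U (fun _ => 1) 0 with hK
  set M := floquetMatrix 1 qq U (fun _ => 1)
  have hcard : Fintype.card (Cell 1 qq) = qq 0 := by simp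
  have hdeg : (-M).charpoly.natDegree = qq 0 := by rw [Matrix.charpoly_natDegree_eq_dim, hcard]
  refine ⟨fun w => floquetDet 1 qq U (fun _ => w) 0, (-M).charpoly - C K, ?_, ?_,
    fun E => oneD_surj qq hqq U 0 E, fun w hw x => ?_⟩
  · apply (Matrix.charpoly_monic (-M)).sub_of_left
    rw [degree_eq_natDegree (Matrix.charpoly_monic (-M)).ne_zero, hdeg]
    exact degree_C_le.trans_lt (by exact_mod_cast hqq 0)
  · rw [natDegree_sub_C, hdeg]
  · obtain ⟨b, hb⟩ := oneD_const qq hqq U U (-x) 0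
    have h1 : (-M).charpoly.eval x = floquetDet 1 qq U (fun _ => 1) (-x) := by
      rw [Matrix.eval_charpoly, floquetDet]
      congr 1
      ext n m
      simp [M, Matrix.scalar_apply, Matrix.diagonal_apply, Matrix.one_apply]
      ring
    rw [eval_sub, eval_C, h1, hb w hw, hb 1 one_ne_zero]
    ring

end OneD

end Part10

section Part11

section StepF
open Polynomial Filter Topology

lemma roots_mem_gersh {m : ℕ} (q : Fin m → ℕ) (U : (Fin m → ℤ) → ℝ) (a : Fin m → ℂ)
    (ha : ∀ j, a j ≠ 0) :
    ∃ R : ℝ, 0 ≤ R ∧ ∀ s : ℝ, 1 ≤ s → ∀ x ∈ (floquetMatrix m q U (fun j => (s : ℂ) * a j)).charpoly.roots,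
      ∃ n : Cell m q, ‖x - s * ∑ j, ee (q j) (n j : ℕ) * a j‖ ≤ R := by
  let R1 : Cell m q → ℝ := fun n => ∑ j, ‖a j‖⁻¹ + ∑ n' : Cell m q,
    ‖dft m q U (fun j => ((n j : ℕ) : ℤ) - ((n' j : ℕ) : ℤ))‖
  have hR1 : ∀ n, 0 ≤ R1 n := fun n => by positivity
  refine ⟨∑ n, R1 n, Finset.sum_nonneg fun n _ => hR1 n, fun s hs x hx => ?_⟩
  set M := floquetMatrix m q U (fun j => (s : ℂ) * a j) with hM
  have hroot : M.charpoly.IsRoot x := (mem_roots'.1 hx).2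
  have hev : Module.End.HasEigenvalue (Matrix.toLin' M) x := by
    rw [Module.End.hasEigenvalue_iff_isRoot_charpoly, Matrix.charpoly_toLin']
    exact hroot
  obtain ⟨n, hn⟩ := eigenvalue_mem_ball hev
  refine ⟨n, le_trans ?_ (Finset.single_le_sum (fun n _ => hR1 n) (Finset.mem_univ n))⟩
  rw [mem_closedBall_iff_norm] at hn
  have hMe : ∀ n', M n n' = (if n = n' then ∑ j, (ee (q j) (n j : ℕ) * ((s : ℂ) * a j) +
      (ee (q j) (n j : ℕ) * ((s : ℂ) * a j))⁻¹) else 0) +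
      dft m q U (fun j => ((n j : ℕ) : ℤ) - ((n' j : ℕ) : ℤ)) := by
    intro n'
    have := floquet_entry m q U (fun j => (s : ℂ) * a j) 0 n n'
    simpa using this
  have hoff : ∑ j ∈ Finset.univ.erase n, ‖M n j‖ = ∑ n' ∈ Finset.univ.erase n,
      ‖dft m q U (fun j => ((n j : ℕ) : ℤ) - ((n' j : ℕ) : ℤ))‖ := by
    refine Finset.sum_congr rfl fun n' hn' => ?_
    rw [hMe, if_neg (Finset.ne_of_mem_erase hn').symm, zero_add]
  have hdiag : M n n - s * ∑ j, ee (q j) (n j : ℕ) * a j =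
      ∑ j, (ee (q j) (n j : ℕ) * ((s : ℂ) * a j))⁻¹ +
        dft m q U (fun j => ((n j : ℕ) : ℤ) - ((n j : ℕ) : ℤ)) := by
    rw [hMe, if_pos rfl, Finset.sum_add_distrib, Finset.mul_sum]
    have : ∑ j, ee (q j) (n j : ℕ) * ((s : ℂ) * a j) = ∑ j, s * (ee (q j) (n j : ℕ) * a j) :=
      Finset.sum_congr rfl fun j _ => by ring
    rw [this]
    ring
  have hsum : ‖∑ j, (ee (q j) (n j : ℕ) * ((s : ℂ) * a j))⁻¹‖ ≤ ∑ j, ‖a j‖⁻¹ := by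
    refine (norm_sum_le _ _).trans (Finset.sum_le_sum fun j _ => ?_)
    rw [norm_inv, norm_mul, ee_norm, one_mul, norm_mul, Complex.norm_real, Real.norm_eq_abs,
      abs_of_nonneg (by linarith)]
    have : 0 < ‖a j‖ := norm_pos_iff.2 (ha j)
    exact inv_anti₀ this (by nlinarith)
  calc ‖x - s * ∑ j, ee (q j) (n j : ℕ) * a j‖
      = ‖(x - M n n) + (M n n - s * ∑ j, ee (q j) (n j : ℕ) * a j)‖ := by congr 1; ring
    _ ≤ ‖x - M n n‖ + ‖M n n - s * ∑ j, ee (q j) (n j : ℕ) * a j‖ := norm_add_le _ _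
    _ ≤ (∑ n' ∈ Finset.univ.erase n,
      ‖dft m q U (fun j => ((n j : ℕ) : ℤ) - ((n' j : ℕ) : ℤ))‖) + (∑ j, ‖a j‖⁻¹ +
        ‖dft m q U (fun j => ((n j : ℕ) : ℤ) - ((n j : ℕ) : ℤ))‖) := by
        rw [hdiag]
        refine add_le_add (hn.trans hoff.le) ((norm_add_le _ _).trans ?_)
        gcongr
    _ = R1 n := by
        simp only [R1]
        rw [← Finset.add_sum_erase Finset.univ _ (Finset.mem_univ n)]
        ring

lemma floquetDet_charpoly {m : ℕ} (q : Fin m → ℕ) (U : (Fin m → ℤ) → ℝ) (z : Fin m → ℂ) (lam : ℂ) :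
    floquetDet m q U z lam = (-1) ^ Fintype.card (Cell m q) *
      (floquetMatrix m q U z).charpoly.eval lam := by
  rw [Matrix.eval_charpoly, ← Matrix.det_neg, floquetDet]
  congr 1
  ext n n'
  simp [Matrix.scalar_apply, Matrix.diagonal_apply, Matrix.one_apply]

lemma kron_prod {d : ℕ} (q : Fin d → ℕ) (hq : ∀ j, 0 < q j) {m : ℕ} (e : Fin m → Fin d)
    (he : Function.Injective e) (k : Fin d) (hk : ∀ i, e i ≠ k) (hk' : ∀ t, t ≠ k → ∃ i, e i = t)
    (V : (Fin d → ℤ) → ℝ)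
    (hmix : ∀ n n' : Cell d q, n k ≠ n' k → (∃ t, t ≠ k ∧ n t ≠ n' t) →
      dft d q V (fun t => ((n t : ℕ) : ℤ) - ((n' t : ℕ) : ℤ)) = 0)
    (lam : ℂ) (z : Fin m → ℂ) (w : ℂ) :
    floquetDet d q V (Function.extend e z (fun _ => w)) lam =
      ((floquetMatrix m (fun i => q (e i)) (avgPot q e V) z).charpoly.roots.map fun x =>
        floquetDet 1 (fun _ : Fin 1 => q k) (avgPot q (fun _ : Fin 1 => k) V) (fun _ => w)
          (-(x - (dft d q V 0 + lam)))).prod := by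
  classical
  let e' : Fin 1 → Fin d := fun _ => k
  have he' : Function.Injective e' := fun _ _ _ => Subsingleton.elim _ _
  let Φ : Cell d q ≃ Cell 1 (fun i => q (e' i)) × Cell m (fun i => q (e i)) :=
    { toFun := fun n => (fun i => n (e' i), fun i => n (e i))
      invFun := fun p => ovc e p.2 (ovc e' p.1 (fun j => ⟨0, hq j⟩))
      left_inv := by
        intro n
        funext t
        by_cases ht : t = k
        · subst ht
          exact (ovc_not_mem e _ _ _ hk).trans (ovc_mem e' he' _ _ 0)
        · obtain ⟨i, rfl⟩ := hk' t ht
          exact ovc_mem e he _ _ i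
      right_inv := by
        rintro ⟨x, y⟩
        refine Prod.ext ?_ ?_
        · funext i
          have hi : i = 0 := Subsingleton.elim _ _
          subst hi
          exact (ovc_not_mem e _ _ _ hk).trans (ovc_mem e' he' _ _ 0)
        · funext i
          exact ovc_mem e he _ _ i }
  set A := floquetMatrix m (fun i => q (e i)) (avgPot q e V) z with hA
  set B := floquetMatrix 1 (fun i => q (e' i)) (avgPot q e' V) (fun _ => w) -
    (dft d q V 0 + lam) • (1 : Matrix (Cell 1 (fun i => q (e' i))) (Cell 1 (fun i => q (e' i))) ℂ)
    with hB
  have hdet := det_kronSum A B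
  have hrhs : ∀ x, Matrix.det (Matrix.scalar (Cell 1 (fun i => q (e' i))) x + B) =
      floquetDet 1 (fun _ : Fin 1 => q k) (avgPot q (fun _ : Fin 1 => k) V) (fun _ => w)
          (-(x - (dft d q V 0 + lam))) := by
    intro x
    unfold floquetDet
    congr 1
    rw [hB]
    ext n n'
    simp only [Matrix.add_apply, Matrix.sub_apply, Matrix.smul_apply, Matrix.scalar_apply,
      Matrix.diagonal_apply, Matrix.one_apply, smul_eq_mul, e']
    split_ifs <;> ring
  simp only [hrhs] at hdet
  rw [← hdet, floquetDet, ← Matrix.det_submatrix_equiv_self Φ]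
  congr 1
  have hAe : ∀ x y, A x y = (if x = y then ∑ j, (ee (q (e j)) (x j : ℕ) * z j +
      (ee (q (e j)) (x j : ℕ) * z j)⁻¹) else 0) +
      dft d q V (Function.extend e (fun j => ((x j : ℕ) : ℤ) - ((y j : ℕ) : ℤ)) 0) := by
    intro x y
    have := floquet_entry m (fun i => q (e i)) (avgPot q e V) z 0 x y
    rw [dft_avg q hq e he] at this
    simpa using this
  have hBe : ∀ x y, B x y = (if x = y then (ee (q k) (x 0 : ℕ) * w +
      (ee (q k) (x 0 : ℕ) * w)⁻¹) - (dft d q V 0 + lam) else 0) +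
      dft d q V (Function.extend e' (fun j => ((x j : ℕ) : ℤ) - ((y j : ℕ) : ℤ)) 0) := by
    intro x y
    have := floquet_entry 1 (fun i => q (e' i)) (avgPot q e' V) (fun _ => w) (dft d q V 0 + lam) x y
    rw [dft_avg q hq e' he'] at this
    rw [Fin.sum_univ_one] at this
    exact this
  have hext0 : ∀ {κ : ℕ} (g : Fin κ → Fin d), Function.Injective g → ∀ l : Fin κ → ℤ,
      (∀ i, l i = 0) → Function.extend g l (0 : Fin d → ℤ) = 0 := by
    intro κ g hg l hl
    have : l = 0 := funext hl
    rw [this]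
    exact Function.extend_zero g
  ext n n'
  rw [floquet_entry, Matrix.submatrix_apply, Matrix.of_apply, hAe, hBe]
  have h1 : (Φ n).1 = (Φ n').1 ↔ n k = n' k := by
    constructor
    · intro h; exact congrFun h 0
    · intro h; funext i; exact h
  have h2 : (Φ n).2 = (Φ n').2 ↔ ∀ t, t ≠ k → n t = n' t := by
    constructor
    · intro h t ht
      obtain ⟨i, rfl⟩ := hk' t ht
      exact congrFun h i
    · intro h; funext i; exact h _ (hk i)
  have hd1 : (∀ t, t ≠ k → n t = n' t) →
      dft d q V (Function.extend e' (fun j => (((Φ n).1 j : ℕ) : ℤ) - (((Φ n').1 j : ℕ) : ℤ)) 0) =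
      dft d q V (fun t => ((n t : ℕ) : ℤ) - ((n' t : ℕ) : ℤ)) := by
    intro h
    congr 1
    funext t
    by_cases ht : t = k
    · subst ht
      exact he'.extend_apply _ _ 0
    · rw [Function.extend_apply', h t ht, sub_self]; rfl
      rintro ⟨i, hi⟩
      exact ht hi.symm
  have hd2 : n k = n' k →
      dft d q V (Function.extend e (fun j => (((Φ n).2 j : ℕ) : ℤ) - (((Φ n').2 j : ℕ) : ℤ)) 0) =
      dft d q V (fun t => ((n t : ℕ) : ℤ) - ((n' t : ℕ) : ℤ)) := by
    intro h
    congr 1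
    funext t
    by_cases ht : t = k
    · subst ht
      rw [Function.extend_apply', h, sub_self]; rfl
      rintro ⟨i, hi⟩
      exact hk i hi
    · obtain ⟨i, rfl⟩ := hk' t ht
      exact he.extend_apply _ _ i
  have hzk : Function.extend e z (fun _ => w) k = w := by
    rw [Function.extend_apply']
    rintro ⟨i, hi⟩
    exact hk i hi
  by_cases c1 : n k = n' k
  · by_cases c2 : ∀ t, t ≠ k → n t = n' t
    · have hnn : n = n' := by
        funext t
        by_cases ht : t = k
        · subst ht; exact c1
        · exact c2 t ht
      subst hnn
      rw [if_pos rfl, if_pos rfl, if_pos rfl, if_pos rfl, if_pos rfl, hd1 (fun _ _ => rfl), hd2 rfl]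
      have hz0 : (fun t => ((n t : ℕ) : ℤ) - ((n t : ℕ) : ℤ)) = (0 : Fin d → ℤ) := by
        funext t; simp
      rw [hz0, sum_split e he _ k hk (fun t h1 h2 => absurd (hk' t h2) (by
        rintro ⟨i, hi⟩; exact h1 i hi)), hzk]
      simp only [he.extend_apply]
      change ∑ i, (ee (q (e i)) (n (e i) : ℕ) * z i + (ee (q (e i)) (n (e i) : ℕ) * z i)⁻¹) +
        (ee (q k) (n k : ℕ) * w + (ee (q k) (n k : ℕ) * w)⁻¹) - lam + dft d q V 0 =
        ∑ i, (ee (q (e i)) (n (e i) : ℕ) * z i + (ee (q (e i)) (n (e i) : ℕ) * z i)⁻¹) +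
        dft d q V 0 + ((ee (q k) (n k : ℕ) * w + (ee (q k) (n k : ℕ) * w)⁻¹) -
          (dft d q V 0 + lam) + dft d q V 0)
      ring
    · have hnn : n ≠ n' := by rintro rfl; exact c2 fun _ _ => rfl
      rw [if_neg hnn, if_pos (h1.2 c1), if_neg (mt h2.1 c2), if_neg (mt h2.1 c2), hd2 c1]
      ring
  · have hnn : n ≠ n' := by rintro rfl; exact c1 rfl
    by_cases c2 : ∀ t, t ≠ k → n t = n' t
    · rw [if_neg hnn, if_neg (mt h1.1 c1), if_pos (h2.2 c2), if_neg (mt h1.1 c1), hd1 c2]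
      ring
    · rw [if_neg hnn, if_neg (mt h1.1 c1), if_neg (mt h2.1 c2), hmix n n' c1 (by
        push Not at c2
        exact c2)]

lemma two_others {d : ℕ} (hd : 3 ≤ d) (k : Fin d) : ∃ t1 t2 : Fin d, t1 ≠ t2 ∧ t1 ≠ k ∧ t2 ≠ k := by
  have h : 1 < (Finset.univ.erase k).card := by
    rw [Finset.card_erase_of_mem (Finset.mem_univ k), Finset.card_univ, Fintype.card_fin]
    omega
  obtain ⟨t1, h1, t2, h2, h12⟩ := Finset.one_lt_card.1 h
  exact ⟨t1, t2, h12, Finset.ne_of_mem_erase h1, Finset.ne_of_mem_erase h2⟩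

lemma pow_eq_ee {Q : ℕ} (hQ : 0 < Q) (x y : ℂ) (hy : y ≠ 0) (h : x ^ Q = y ^ Q) :
    ∃ i : Fin Q, x = ee Q (i : ℕ) * y := by
  have h1 : (x / y) ^ Q = 1 := by rw [div_pow, h, div_self (pow_ne_zero _ hy)]
  have hz : IsPrimitiveRoot (ee Q 1) Q := by
    have := Complex.isPrimitiveRoot_exp Q hQ.ne'
    convert this using 1
    unfold ee
    congr 1
    push_cast
    ring
  haveI : NeZero Q := ⟨hQ.ne'⟩
  obtain ⟨i, hi, hi'⟩ := hz.eq_pow_of_pow_eq_one h1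
  refine ⟨⟨i, hi⟩, ?_⟩
  rw [← ee_natmul, mul_one] at hi'
  exact ((eq_div_iff hy).1 hi').symm

lemma stepF {d : ℕ} (hd : 3 ≤ d) (q : Fin d → ℕ) (hq : ∀ j, 0 < q j)
    (hco : ∀ i j : Fin d, i ≠ j → Nat.Coprime (q i) (q j))
    (V Y : (Fin d → ℤ) → ℝ) (lam : ℂ)
    (hEq : ∀ z : Fin d → ℂ, (∀ j, z j ≠ 0) → floquetDet d q V z lam = floquetDet d q Y z lam)
    {m : ℕ} (e : Fin m → Fin d)
    (he : Function.Injective e) (k : Fin d) (hk : ∀ i, e i ≠ k) (hk' : ∀ t, t ≠ k → ∃ i, e i = t)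
    (hV : ∀ n n' : Cell d q, n k ≠ n' k → (∃ t, t ≠ k ∧ n t ≠ n' t) →
      dft d q V (fun t => ((n t : ℕ) : ℤ) - ((n' t : ℕ) : ℤ)) = 0)
    (hY : ∀ n n' : Cell d q, n k ≠ n' k → (∃ t, t ≠ k ∧ n t ≠ n' t) →
      dft d q Y (fun t => ((n t : ℕ) : ℤ) - ((n' t : ℕ) : ℤ)) = 0) :
    FloquetIsospectral m (fun i => q (e i)) (avgPot q e V) (avgPot q e Y) := by
  classical
  obtain ⟨t1, t2, h12, ht1, ht2⟩ := two_others hd k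
  obtain ⟨i0, hi0⟩ := hk' t1 ht1
  obtain ⟨i1, hi1⟩ := hk' t2 ht2
  have h01 : i0 ≠ i1 := by
    rintro rfl
    exact h12 (hi0.symm.trans hi1)
  have hiso := stepE q hq hco V Y lam hEq (fun _ : Fin 1 => k)
    (fun _ _ _ => Subsingleton.elim _ _) t1 t2 h12 (fun _ => ht1.symm) (fun _ => ht2.symm)
  have h0 := dft_zero_eq hd q hq hco V Y lam hEq
  obtain ⟨A, f, hf, hdeg, hA, hAf⟩ := oneD (fun _ : Fin 1 => q k) (fun _ => hq k)
    (avgPot q (fun _ : Fin 1 => k) V)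
  set c := dft d q V 0 + lam with hc
  have hQ : 0 < q k := hq k
  set f' := f.comp (X - C c) with hf'
  have hfm : f'.Monic := hf.comp (monic_X_sub_C c) (by rw [natDegree_X_sub_C]; exact one_ne_zero)
  have hfd : f'.natDegree = q k := by
    rw [hf', natDegree_comp, natDegree_X_sub_C, mul_one, hdeg]
  have hprod : ∀ z : Fin m → ℂ, (∀ j, z j ≠ 0) → ∀ E : ℂ,
      ((floquetMatrix m (fun i => q (e i)) (avgPot q e V) z).charpoly.roots.map
        fun x => E + f'.eval x).prod =
      ((floquetMatrix m (fun i => q (e i)) (avgPot q e Y) z).charpoly.roots.map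
        fun x => E + f'.eval x).prod := by
    intro z hz E
    obtain ⟨w, hw, hwE⟩ := hA E
    have hzw : ∀ j, Function.extend e z (fun _ => w) j ≠ 0 := by
      intro j
      by_cases hj : ∃ i, e i = j
      · obtain ⟨i, rfl⟩ := hj
        rw [he.extend_apply]
        exact hz i
      · rw [Function.extend_apply' _ _ _ hj]
        exact hw
    have h1 := hEq _ hzw
    rw [kron_prod q hq e he k hk hk' V hV lam z w, kron_prod q hq e he k hk hk' Y hY lam z w,
      ← h0, ← hc] at h1
    have hval : ∀ x, floquetDet 1 (fun _ : Fin 1 => q k) (avgPot q (fun _ : Fin 1 => k) V)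
        (fun _ => w) (-(x - c)) = E + f'.eval x := by
      intro x
      rw [hAf w hw, hwE, hf', eval_comp, eval_sub, eval_X, eval_C]
    have hvalY : ∀ x, floquetDet 1 (fun _ : Fin 1 => q k) (avgPot q (fun _ : Fin 1 => k) Y)
        (fun _ => w) (-(x - c)) = E + f'.eval x := by
      intro x
      rw [← hval x]
      exact (hiso (fun _ => w) (fun _ => hw) _).symm
    simp only [hval, hvalY] at h1
    exact h1
  let q' : Fin m → ℕ := fun i => q (e i)
  have hq' : ∀ j, 0 < q' j := fun j => hq _
  have hco' : ∀ i j : Fin m, i ≠ j → Nat.Coprime (q' i) (q' j) := fun i j hij =>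
    hco _ _ fun h => hij (he h)
  let J := Cell m q' ⊕ {p : Cell m q' × Cell m q' // p.1 ≠ p.2} × Fin (q k)
  let u : J → Fin m → ℂ := fun x => match x with
    | Sum.inl n => fun j => ee (q' j) (n j : ℕ)
    | Sum.inr (p, i) => fun j => ee (q' j) (p.1.1 j : ℕ) - ee (q k) (i : ℕ) * ee (q' j) (p.1.2 j : ℕ)
  have hu : ∀ x, u x ≠ 0 := by
    rintro (n | ⟨⟨⟨n, n'⟩, hnn⟩, i⟩) h
    · exact ee_ne_zero _ _ (congrFun h i0)
    · apply hnn
      have key : ∀ j, ee (q' j) (n j : ℕ) = ee (q k) (i : ℕ) * ee (q' j) (n' j : ℕ) := fun j =>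
        sub_eq_zero.1 (congrFun h j)
      have h1 := nonprop hq' hco' n n' _ i0 i1 h01 (key i0) (key i1)
      funext j
      apply ee_inj
      have := key j
      rw [h1, one_mul] at this
      exact this
  intro z hz mu
  refine floquetDet_eq_of_generic u hu q' (avgPot q e V) (avgPot q e Y) mu (fun a ha hua => ?_) z hz
  obtain ⟨RV, hRV, hV'⟩ := roots_mem_gersh q' (avgPot q e V) a ha
  obtain ⟨RY, hRY, hY'⟩ := roots_mem_gersh q' (avgPot q e Y) a ha
  have hl0 : ∀ n : Cell m q', ∑ j, ee (q' j) (n j : ℕ) * a j ≠ 0 := fun n => hua (Sum.inl n)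
  have hinj := inj_large f' hfm (by rw [hfd]; exact hQ)
    (fun n : Cell m q' => ∑ j, ee (q' j) (n j : ℕ) * a j) hl0 (by
      intro n n' hnn hpow
      rw [hfd] at hpow
      obtain ⟨i, hi⟩ := pow_eq_ee hQ _ _ (hl0 n') hpow
      apply hua (Sum.inr (⟨(n, n'), hnn⟩, i))
      have : ∀ j, u (Sum.inr (⟨(n, n'), hnn⟩, i)) j * a j = ee (q' j) (n j : ℕ) * a j -
          ee (q k) (i : ℕ) * (ee (q' j) (n' j : ℕ) * a j) := fun j => by
        simp only [u]
        ring
      rw [Finset.sum_congr rfl fun j _ => this j, Finset.sum_sub_distrib, ← Finset.mul_sum, hi,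
        sub_self]) (RV + RY) (by positivity)
  filter_upwards [hinj, eventually_ge_atTop 1] with s hs hs1
  have hmem : ∀ x, (x ∈ (floquetMatrix m q' (avgPot q e V) (fun j => (s : ℂ) * a j)).charpoly.roots ∨
      x ∈ (floquetMatrix m q' (avgPot q e Y) (fun j => (s : ℂ) * a j)).charpoly.roots) →
      ∃ n : Cell m q', ‖x - s * ∑ j, ee (q' j) (n j : ℕ) * a j‖ ≤ RV + RY := by
    rintro x (hx | hx)
    · obtain ⟨n, hn⟩ := hV' s hs1 x hx
      exact ⟨n, hn.trans (by linarith)⟩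
    · obtain ⟨n, hn⟩ := hY' s hs1 x hx
      exact ⟨n, hn.trans (by linarith)⟩
  have hs0 : (s : ℂ) ≠ 0 := by
    have : s ≠ 0 := by linarith
    exact_mod_cast this
  have hchar := charpoly_eq_of_prod _ _ (fun x => f'.eval x)
    (hprod (fun j => (s : ℂ) * a j) (fun j => mul_ne_zero hs0 (ha j))) (by
      intro x y hx hy hxy
      obtain ⟨n, hn⟩ := hmem x hx
      obtain ⟨n', hn'⟩ := hmem y hy
      exact hs n n' x y hn hn' hxy)
  rw [floquetDet_charpoly, floquetDet_charpoly]
  exact congrArg (fun p : ℂ[X] => (-1) ^ Fintype.card (Cell m q') * p.eval mu) hchar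

end StepF

end Part11

/-- Theorem 1.5: if `V` and `Y` are Fermi isospectral and `Y = ⊕ Y_j` is
separable, then `V = ⊕ V_j` is separable and, up to a constant, `V_j` and `Y_j` are Floquet
isospectral. -/
theorem fermi_isospectral_separable_rigidity_with_floquet
    (d r : ℕ) (hd : 3 ≤ d) (hr : 2 ≤ r)
    (q : Fin d → ℕ) (hq : ∀ j, 0 < q j)
    (hco : ∀ i j : Fin d, i ≠ j → Nat.Coprime (q i) (q j))
    (D : Fin r → ℕ) (hD : ∀ j, 1 ≤ D j) (hsum : ∑ j, D j = d)
    (V Y : (Fin d → ℤ) → ℝ)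
    (hVper : IsPeriodicPotential d q V) (hYper : IsPeriodicPotential d q Y)
    (hFermi : FermiIsospectral d q V Y)
    (Yj : (j : Fin r) → (Fin (D j) → ℤ) → ℝ)
    (hYsep : ∀ n : Fin d → ℤ, Y n = ∑ j, Yj j (fun i => n (blockEmbed D hsum j i))) :
    ∃ Vj : (j : Fin r) → (Fin (D j) → ℤ) → ℝ,
      (∀ n : Fin d → ℤ, V n = ∑ j, Vj j (fun i => n (blockEmbed D hsum j i))) ∧
      ∀ j : Fin r, ∃ C : ℝ,
        FloquetIsospectral (D j) (fun i => q (blockEmbed D hsum j i))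
          (fun m => Vj j m + C) (Yj j) := by
  classical
  obtain ⟨lam, hlam⟩ := hFermi
  have hF : ∀ z : Fin d → ℂ, (∀ j, z j ≠ 0) → floquetDet d q V z lam = 0 →
      floquetDet d q Y z lam = 0 := by
    intro z hz h0
    have h1 : z ∈ {z : Fin d → ℂ | (∀ j, z j ≠ 0) ∧ floquetDet d q V z lam = 0} := ⟨hz, h0⟩
    rw [hlam] at h1
    exact h1.2
  have hEq := step1 hd q hq hco V Y lam hF
  have hmY : MixedZero q D hsum Y := mixedZero_sep q hq D hsum Y Yj hYsep
  have hmV : MixedZero q D hsum V := by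
    intro n n' j j' i i' hjj hi hi'
    exact step2 hd q hq hco V Y lam hEq n n' _ _
      (fun h => hjj (block_disj D hsum j j' i i' h)) hi hi' (hmY n n' j j' i i' hjj hi hi')
  have H : ∀ j : Fin r, FloquetIsospectral (D j) (fun i => q (blockEmbed D hsum j i))
      (avgPot q (blockEmbed D hsum j) V) (avgPot q (blockEmbed D hsum j) Y) := by
    intro j
    have hj' : ∃ j' : Fin r, j' ≠ j := by
      have : Nontrivial (Fin r) := Fin.nontrivial_iff_two_le.2 hr
      exact exists_ne j
    obtain ⟨j', hjj⟩ := hj'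
    set k : Fin d := blockEmbed D hsum j' ⟨0, hD j'⟩ with hkdef
    have hk : ∀ i, blockEmbed D hsum j i ≠ k := fun i h => hjj (block_disj D hsum _ _ _ _ h).symm
    by_cases h2 : ∃ t2, t2 ≠ k ∧ ∀ i, blockEmbed D hsum j i ≠ t2
    · obtain ⟨t2, h2k, h2e⟩ := h2
      exact stepE q hq hco V Y lam hEq _ (block_inj D hsum j) k t2 h2k.symm hk h2e
    · push Not at h2
      have hmix : ∀ U : (Fin d → ℤ) → ℝ, MixedZero q D hsum U → ∀ n n' : Cell d q, n k ≠ n' k →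
          (∃ t, t ≠ k ∧ n t ≠ n' t) →
          dft d q U (fun t => ((n t : ℕ) : ℤ) - ((n' t : ℕ) : ℤ)) = 0 := by
        rintro U hU n n' hnk ⟨t, htk, hnt⟩
        obtain ⟨i, rfl⟩ := h2 t htk
        exact hU n n' j j' i ⟨0, hD j'⟩ hjj.symm hnt hnk
      exact stepF hd q hq hco V Y lam hEq _ (block_inj D hsum j) k hk h2 (hmix V hmV) (hmix Y hmY)
  choose κ hκ using fun j => avg_sep q hq D hsum Y Yj hYsep j
  set c : ℝ := (dft d q V 0).re with hc
  have hcr : dft d q V 0 = (c : ℂ) := by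
    have h1 := dft_neg d q V 0
    rw [neg_zero] at h1
    exact (Complex.conj_eq_iff_re.1 h1.symm).symm
  have hr0 : (r : ℝ) ≠ 0 := by
    have : r ≠ 0 := by omega
    exact_mod_cast this
  refine ⟨fun j m => avgPot q (blockEmbed D hsum j) V m - ((r - 1 : ℝ) / r) * c, fun n => ?_,
    fun j => ⟨((r - 1 : ℝ) / r) * c - κ j, ?_⟩⟩
  · have h1 := sep_of_mixedZero q hq D hsum V hVper hmV n
    rw [hcr] at h1
    have h2 : V n = ∑ j, avgPot q (blockEmbed D hsum j) V (fun i => n (blockEmbed D hsum j i)) -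
        (r - 1 : ℝ) * c := by exact_mod_cast h1
    rw [h2, Finset.sum_sub_distrib, Finset.sum_const, Finset.card_univ, Fintype.card_fin,
      nsmul_eq_mul]
    field_simp
  · have h1 : (fun m => avgPot q (blockEmbed D hsum j) V m - ((r - 1 : ℝ) / r) * c +
        (((r - 1 : ℝ) / r) * c - κ j)) = fun m => avgPot q (blockEmbed D hsum j) V m + (-κ j) := by
      funext m; ring
    have h2 : Yj j = fun m => avgPot q (blockEmbed D hsum j) Y m + (-κ j) := by
      funext m; rw [hκ]; ring
    intro z hz mu
    have h3 := H j z hz (mu - ((-κ j : ℝ) : ℂ))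
    rw [← floquetDet_add_const _ _ (fun _ => hq _), ← floquetDet_add_const _ _ (fun _ => hq _),
      ← h1, ← h2] at h3
    exact h3

end
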